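/- Let q(x, y) = ax² + bxy + cy² be a primitive positive definite binary integer quadratic form and let N be a positive integer. Then q represents infinitely many primes p with p ∤ N and p odd; in particular there exist integers x, y with q(x, y) = p a prime, p odd, p ∤ N, and gcd(x, y) = 1. -/

import Mathlib

section GaussianSums

open Real

theorem exists_abs_tsum_exp_sub_le :
    ∃ C : ℝ, 0 ≤ C ∧ ∀ w t : ℝ, 0 < t →
      |(∑' n : ℤ, rexp (-π * (n + w) ^ 2 * t)) - 1 / √t| ≤ C * √t := by
  have hs : Summable fun n : ℤ ↦ (1 / (n : ℝ) ^ 2) :=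
    Real.summable_one_div_int_pow.mpr one_lt_two
  refine ⟨∑' n : ℤ, 1 / (n : ℝ) ^ 2, tsum_nonneg fun n ↦ by positivity, fun w t ht ↦ ?_⟩
  have hsq : 0 < √t := Real.sqrt_pos.mpr ht
  have hcos : |HurwitzZeta.cosKernel w (1 / t) - 1| ≤ t * ∑' n : ℤ, 1 / (n : ℝ) ^ 2 := by
    have h := HurwitzZeta.hasSum_int_cosKernel₀ w (one_div_pos.mpr ht)
    rw [← tsum_mul_left, ← Real.norm_eq_abs, ← Complex.norm_real]
    push_cast
    rw [← h.tsum_eq]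
    refine tsum_of_norm_bounded (hs.mul_left t).hasSum fun n ↦ ?_
    split_ifs with hn
    · simp [hn]
    · have hn0 : (0 : ℝ) < (n : ℝ) ^ 2 := by positivity
      rw [norm_mul, Complex.norm_real, Real.norm_eq_abs, abs_of_pos (Real.exp_pos _),
        show (2 * π * Complex.I * w * n : ℂ) = ((2 * π * w * n : ℝ) : ℂ) * Complex.I by
          push_cast; ring, Complex.norm_exp_ofReal_mul_I, one_mul]
      have hx : 0 < (n : ℝ) ^ 2 / t := by positivity
      calc rexp (-π * n ^ 2 * (1 / t)) ≤ rexp (-((n : ℝ) ^ 2 / t)) := by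
            apply Real.exp_le_exp.mpr
            rw [show -π * (n : ℝ) ^ 2 * (1 / t) = -(π * ((n : ℝ) ^ 2 / t)) by ring]
            nlinarith [Real.pi_gt_three]
        _ ≤ ((n : ℝ) ^ 2 / t)⁻¹ := by
            rw [Real.exp_neg]
            exact inv_anti₀ hx (by linarith [Real.add_one_le_exp ((n : ℝ) ^ 2 / t)])
        _ = t * (1 / (n : ℝ) ^ 2) := by field_simp
  rw [(HurwitzZeta.hasSum_int_evenKernel w ht).tsum_eq,
    HurwitzZeta.evenKernel_functional_equation, ← Real.sqrt_eq_rpow,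
    show 1 / √t * HurwitzZeta.cosKernel w (1 / t) - 1 / √t
      = 1 / √t * (HurwitzZeta.cosKernel w (1 / t) - 1) by ring, abs_mul,
    abs_of_pos (by positivity)]
  calc 1 / √t * |HurwitzZeta.cosKernel w (1 / t) - 1|
      ≤ 1 / √t * (t * ∑' n : ℤ, 1 / (n : ℝ) ^ 2) := by gcongr
    _ = (∑' n : ℤ, 1 / (n : ℝ) ^ 2) * √t := by
        nth_rewrite 2 [← Real.mul_self_sqrt ht.le]
        field_simp

theorem exists_abs_tsum_exp_quadratic_sub_le (β δ : ℝ) (hδ : 0 < δ) :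
    ∃ C : ℝ, 0 ≤ C ∧ ∀ u v t : ℝ, 0 < t →
      (Summable fun p : ℤ × ℤ ↦
        rexp (-π * ((p.1 + u + β * (p.2 + v)) ^ 2 + δ * (p.2 + v) ^ 2) * t)) ∧
      |(∑' p : ℤ × ℤ, rexp (-π * ((p.1 + u + β * (p.2 + v)) ^ 2 + δ * (p.2 + v) ^ 2) * t))
        - 1 / (√δ * t)| ≤ C * (1 + t) := by
  obtain ⟨C, hC, h⟩ := exists_abs_tsum_exp_sub_le
  refine ⟨C * √δ + C * (1 / √δ) + C * (C * √δ), by positivity, fun u v t ht ↦ ?_⟩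
  have hsq : 0 < √t := Real.sqrt_pos.mpr ht
  have hsd : 0 < √δ := Real.sqrt_pos.mpr hδ
  have hts : √t * √t = t := Real.mul_self_sqrt ht.le
  set A : ℤ → ℝ := fun y ↦ ∑' x : ℤ, rexp (-π * (x + (u + β * (y + v))) ^ 2 * t) with hA
  set E : ℤ → ℝ := fun y ↦ rexp (-π * (y + v) ^ 2 * (δ * t)) with hE
  have hEs : Summable E := (HurwitzZeta.hasSum_int_evenKernel v (mul_pos hδ ht)).summable
  have hE0 (y) : 0 ≤ E y := (Real.exp_pos _).le
  have hAb (y) : |A y - 1 / √t| ≤ C * √t := h _ _ ht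
  have hsplit (y x : ℤ) :
      rexp (-π * ((x + u + β * (y + v)) ^ 2 + δ * (y + v) ^ 2) * t)
        = E y * rexp (-π * (x + (u + β * (y + v))) ^ 2 * t) := by
    rw [hE, ← Real.exp_add]; congr 1; ring
  have hinner (y : ℤ) : HasSum (fun x : ℤ ↦
      rexp (-π * ((x + u + β * (y + v)) ^ 2 + δ * (y + v) ^ 2) * t)) (E y * A y) := by
    simp_rw [hsplit]
    exact ((HurwitzZeta.hasSum_int_evenKernel _ ht).summable.hasSum).mul_left _
  have hEAdiff : Summable fun y ↦ E y * (A y - 1 / √t) := by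
    refine Summable.of_norm_bounded (hEs.mul_right (C * √t)) fun y ↦ ?_
    rw [norm_mul, Real.norm_eq_abs, Real.norm_eq_abs, abs_of_nonneg (hE0 y)]
    exact mul_le_mul_of_nonneg_left (hAb y) (hE0 y)
  have hEA : Summable fun y ↦ E y * A y := by
    refine (hEAdiff.add (hEs.mul_right (1 / √t))).congr fun y ↦ by ring
  have hsum' : Summable fun p : ℤ × ℤ ↦
        rexp (-π * ((p.2 + u + β * (p.1 + v)) ^ 2 + δ * (p.1 + v) ^ 2) * t) := by
    refine (summable_prod_of_nonneg fun p ↦ (Real.exp_pos _).le).mpr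
      ⟨fun y ↦ (hinner y).summable, ?_⟩
    exact hEA.congr fun y ↦ ((hinner y).tsum_eq).symm
  have hsum : Summable fun p : ℤ × ℤ ↦
        rexp (-π * ((p.1 + u + β * (p.2 + v)) ^ 2 + δ * (p.2 + v) ^ 2) * t) :=
    (Equiv.prodComm ℤ ℤ).summable_iff.mpr hsum'
  refine ⟨hsum, ?_⟩
  have heq : (∑' p : ℤ × ℤ,
      rexp (-π * ((p.1 + u + β * (p.2 + v)) ^ 2 + δ * (p.2 + v) ^ 2) * t))
      = (∑' y, E y * (A y - 1 / √t)) + (∑' y, E y) * (1 / √t) := by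
    rw [← (Equiv.prodComm ℤ ℤ).tsum_eq]
    simp only [Equiv.prodComm_apply, Prod.fst_swap, Prod.snd_swap]
    rw [hsum'.tsum_prod, ← tsum_mul_right, ← hEAdiff.tsum_add (hEs.mul_right _)]
    refine tsum_congr fun y ↦ ?_
    rw [(hinner y).tsum_eq]; ring
  have hB : |(∑' y, E y) - 1 / √(δ * t)| ≤ C * √(δ * t) := h v (δ * t) (mul_pos hδ ht)
  rw [Real.sqrt_mul hδ.le] at hB
  have hBle : (∑' y, E y) ≤ 1 / (√δ * √t) + C * (√δ * √t) := by
    linarith [(abs_le.mp hB).2]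
  have herr : |∑' y, E y * (A y - 1 / √t)| ≤ (∑' y, E y) * (C * √t) := by
    rw [← tsum_mul_right, ← Real.norm_eq_abs]
    refine tsum_of_norm_bounded (hEs.mul_right (C * √t)).hasSum fun y ↦ ?_
    rw [norm_mul, Real.norm_eq_abs, Real.norm_eq_abs, abs_of_nonneg (hE0 y)]
    exact mul_le_mul_of_nonneg_left (hAb y) (hE0 y)
  have e1 : (∑' y, E y) * (1 / √t) - 1 / (√δ * t)
      = ((∑' y, E y) - 1 / (√δ * √t)) * (1 / √t) := by
    have : 1 / (√δ * t) = 1 / (√δ * √t) * (1 / √t) := by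
      rw [div_mul_div_comm, mul_assoc, hts, one_mul]
    rw [this]; ring
  rw [heq, show (∑' y, E y * (A y - 1 / √t)) + (∑' y, E y) * (1 / √t) - 1 / (√δ * t)
    = (∑' y, E y * (A y - 1 / √t)) + ((∑' y, E y) * (1 / √t) - 1 / (√δ * t)) by ring, e1]
  calc _ ≤ (1 / (√δ * √t) + C * (√δ * √t)) * (C * √t) + C * (√δ * √t) * (1 / √t) := by
        refine (abs_add_le _ _).trans (add_le_add (herr.trans ?_) ?_)
        · gcongr
        · rw [abs_mul, abs_of_pos (show 0 < 1 / √t by positivity)]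
          gcongr
    _ = C * √δ + C * (1 / √δ) + C * (C * √δ) * (√t * √t) := by
        field_simp; ring
    _ ≤ _ := by
        rw [hts]
        have h1 : 0 ≤ C * √δ + C * (1 / √δ) := by positivity
        have h2 : 0 ≤ C * (C * √δ) := by positivity
        nlinarith

end GaussianSums

section IndexedDirichletSeries

open Real Filter Topology

variable {ι : Type*}

/-- The sum of the weights `w i` over the indices with `ν i = n`. -/
noncomputable def fiberSum (ν : ι → ℕ) (w : ι → ℂ) (n : ℕ) : ℂ := ∑' i : {i // ν i = n}, w i

theorem lSeriesHasSum_fiberSum {ν : ι → ℕ} (hν : ∀ i, 1 ≤ ν i) {w : ι → ℂ} {s : ℂ}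
    (hs : Summable fun i ↦ ‖w i‖ * (ν i : ℝ) ^ (-s.re)) :
    LSeriesHasSum (fiberSum ν w) s (∑' i, w i * (ν i : ℂ) ^ (-s)) := by
  have hsum : Summable fun i ↦ w i * (ν i : ℂ) ^ (-s) := by
    refine Summable.of_norm (hs.congr fun i ↦ ?_)
    rw [norm_mul, Complex.norm_natCast_cpow_of_pos (hν i), Complex.neg_re]
  have h2 := (Equiv.sigmaFiberEquiv ν).hasSum_iff.mpr hsum.hasSum
  have h3 := h2.sigma fun n ↦ (h2.summable.sigma_factor n).hasSum
  refine h3.congr_fun ?_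
  intro n
  rcases Nat.eq_zero_or_pos n with rfl | hn
  · have : IsEmpty {i // ν i = 0} := ⟨fun i ↦ by have := hν i.1; have := i.2; omega⟩
    simp
  · rw [LSeries.term_of_ne_zero hn.ne', fiberSum, div_eq_mul_inv, ← Complex.cpow_neg,
      ← tsum_mul_right]
    refine tsum_congr fun i ↦ ?_
    simp [Equiv.sigmaFiberEquiv, i.2]

theorem fiberSum_log_mul (ν : ι → ℕ) (w : ι → ℂ) :
    fiberSum ν (fun i ↦ (Real.log (ν i) : ℂ) * w i) = LSeries.logMul (fiberSum ν w) := by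
  ext n
  rw [LSeries.logMul, fiberSum, fiberSum, ← tsum_mul_left]
  refine tsum_congr fun i ↦ ?_
  rw [i.2, Complex.ofReal_log (Nat.cast_nonneg n), Complex.ofReal_natCast]

theorem fiberSum_nonneg (ν : ι → ℕ) {w : ι → ℝ} (hw : ∀ i, 0 ≤ w i) (n : ℕ) :
    ∃ r : ℝ, 0 ≤ r ∧ fiberSum ν (fun i ↦ (w i : ℂ)) n = r :=
  ⟨∑' i : {i // ν i = n}, w i, tsum_nonneg fun _ ↦ hw _, by rw [fiberSum, Complex.ofReal_tsum]⟩

theorem summable_rpow_neg_of_tsum_exp_le {ν : ι → ℕ} (hν : ∀ i, 1 ≤ ν i) {C : ℝ}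
    (hs : ∀ t : ℝ, 0 < t → Summable fun i ↦ rexp (-(ν i) * t))
    (hC : ∀ t : ℝ, 0 < t → t ≤ 1 → ∑' i, rexp (-(ν i) * t) ≤ C / t) {σ : ℝ} (hσ : 1 < σ) :
    Summable fun i ↦ (ν i : ℝ) ^ (-σ) := by
  have h2 (j : ℕ) : (0 : ℝ) < (1 / 2) ^ j := by positivity
  have key : Summable fun p : ℕ × ι ↦
      ((2 : ℝ) ^ (-σ)) ^ p.1 * rexp (-(ν p.2) * (1 / 2) ^ p.1) := by
    refine (summable_prod_of_nonneg fun p ↦ by positivity).mpr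
      ⟨fun j ↦ (hs ((1 / 2) ^ j) (h2 j)).mul_left (((2 : ℝ) ^ (-σ)) ^ j), ?_⟩
    have hgeo : Summable fun j : ℕ ↦ C * ((2 : ℝ) ^ (1 - σ)) ^ j := by
      refine (summable_geometric_of_lt_one (by positivity) ?_).mul_left C
      exact Real.rpow_lt_one_of_one_lt_of_neg one_lt_two (by linarith)
    refine Summable.of_nonneg_of_le (fun j ↦ tsum_nonneg fun i ↦ by positivity) (fun j ↦ ?_) hgeo
    simp only [tsum_mul_left]
    calc ((2 : ℝ) ^ (-σ)) ^ j * ∑' i, rexp (-(ν i) * (1 / 2) ^ j)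
        ≤ ((2 : ℝ) ^ (-σ)) ^ j * (C / (1 / 2) ^ j) := by
          gcongr
          exact hC _ (h2 j) (pow_le_one₀ (by norm_num) (by norm_num))
      _ = C * ((2 : ℝ) ^ (1 - σ)) ^ j := by
          rw [show (1 - σ) = 1 + -σ by ring, Real.rpow_add two_pos, mul_pow, Real.rpow_one,
            one_div, inv_pow, div_inv_eq_mul]
          ring
  have hinj : Function.Injective fun i : ι ↦ (Nat.log 2 (ν i), i) :=
    fun i j h ↦ (Prod.ext_iff.mp h).2
  refine Summable.of_nonneg_of_le (fun i ↦ by positivity) (fun i ↦ ?_)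
    ((key.comp_injective hinj).mul_left (rexp 2))
  simp only [Function.comp_apply]
  set j := Nat.log 2 (ν i) with hj
  have hle : (2 : ℝ) ^ j ≤ ν i := by
    exact_mod_cast Nat.pow_log_le_self 2 (by have := hν i; omega)
  have hlt : (ν i : ℝ) ≤ 2 * 2 ^ j := by
    have := Nat.lt_pow_succ_log_self (b := 2) one_lt_two (ν i)
    rw [pow_succ, mul_comm] at this
    exact_mod_cast this.le
  have h3 : 1 ≤ rexp 2 * rexp (-(ν i) * (1 / 2) ^ j) := by
    rw [← Real.exp_add]
    apply Real.one_le_exp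
    have : (ν i : ℝ) * (1 / 2) ^ j ≤ 2 := by
      rw [one_div, inv_pow, ← div_eq_mul_inv, div_le_iff₀ (by positivity)]; exact hlt
    linarith
  have h4 : (ν i : ℝ) ^ (-σ) ≤ ((2 : ℝ) ^ (-σ)) ^ j := by
    rw [← Real.rpow_natCast, ← Real.rpow_mul two_pos.le, mul_comm, Real.rpow_mul two_pos.le,
      Real.rpow_natCast]
    exact Real.rpow_le_rpow_of_nonpos (by positivity) hle (by linarith)
  calc (ν i : ℝ) ^ (-σ) ≤ ((2 : ℝ) ^ (-σ)) ^ j * 1 := by rw [mul_one]; exact h4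
    _ ≤ ((2 : ℝ) ^ (-σ)) ^ j * (rexp 2 * rexp (-(ν i) * (1 / 2) ^ j)) := by gcongr
    _ = _ := by ring

theorem summable_log_mul_rpow_neg {ν : ι → ℕ} (hν : ∀ i, 1 ≤ ν i)
    (hs : ∀ σ : ℝ, 1 < σ → Summable fun i ↦ (ν i : ℝ) ^ (-σ)) {σ : ℝ} (hσ : 1 < σ) :
    Summable fun i ↦ Real.log (ν i) * (ν i : ℝ) ^ (-σ) := by
  set ε := (σ - 1) / 2 with hε
  have hε0 : 0 < ε := by rw [hε]; linarith
  refine Summable.of_nonneg_of_le (fun i ↦ ?_) (fun i ↦ ?_)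
    ((hs (σ - ε) (by rw [hε]; linarith)).mul_left (1 / ε))
  · have : (1 : ℝ) ≤ ν i := by exact_mod_cast hν i
    have := Real.log_nonneg this
    positivity
  · have h1 : (0 : ℝ) < ν i := by exact_mod_cast hν i
    have := Real.log_le_rpow_div h1.le hε0
    calc Real.log (ν i) * (ν i : ℝ) ^ (-σ) ≤ (ν i : ℝ) ^ ε / ε * (ν i : ℝ) ^ (-σ) := by gcongr
      _ = 1 / ε * (ν i : ℝ) ^ (-(σ - ε)) := by
        rw [show -(σ - ε) = ε + -σ by ring, Real.rpow_add h1]; ring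

end IndexedDirichletSeries

section MellinContinuation

open Real Filter Topology Asymptotics MeasureTheory

variable {ι : Type*}

theorem norm_weighted_tsum_exp_le {ν : ι → ℕ} {w : ι → ℂ} (hw : ∀ i, ‖w i‖ ≤ 1)
    (hs : ∀ t : ℝ, 0 < t → Summable fun i ↦ rexp (-(ν i) * t)) {t : ℝ} (ht : 0 < t) :
    ‖∑' i, w i * rexp (-(ν i) * t)‖ ≤ ∑' i, rexp (-(ν i) * t) := by
  refine tsum_of_norm_bounded (hs t ht).hasSum fun i ↦ ?_
  rw [norm_mul, Complex.norm_real, Real.norm_eq_abs, abs_of_pos (Real.exp_pos _)]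
  exact mul_le_of_le_one_left (Real.exp_pos _).le (hw i)

theorem continuousOn_weighted_tsum_exp {ν : ι → ℕ} {w : ι → ℂ} (hw : ∀ i, ‖w i‖ ≤ 1)
    (hs : ∀ t : ℝ, 0 < t → Summable fun i ↦ rexp (-(ν i) * t)) :
    ContinuousOn (fun t : ℝ ↦ ∑' i, w i * rexp (-(ν i) * t)) (Set.Ioi 0) := by
  intro t ht
  have ht' : 0 < t / 2 := half_pos ht
  have : ContinuousOn (fun t : ℝ ↦ ∑' i, w i * rexp (-(ν i) * t)) (Set.Ioi (t / 2)) := by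
    refine continuousOn_tsum (fun i ↦ by fun_prop) (hs _ ht') fun i x hx ↦ ?_
    rw [norm_mul, Complex.norm_real, Real.norm_eq_abs, abs_of_pos (Real.exp_pos _)]
    refine (mul_le_of_le_one_left (Real.exp_pos _).le (hw i)).trans (Real.exp_le_exp.mpr ?_)
    have : (0 : ℝ) ≤ ν i := Nat.cast_nonneg _
    have hx' : t / 2 < x := hx
    nlinarith
  exact (this.continuousAt (Ioi_mem_nhds (half_lt_self ht))).continuousWithinAt

theorem weighted_tsum_exp_isBigO_atTop {ν : ι → ℕ} (hν : ∀ i, 1 ≤ ν i) {w : ι → ℂ}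
    (hw : ∀ i, ‖w i‖ ≤ 1) (hs : ∀ t : ℝ, 0 < t → Summable fun i ↦ rexp (-(ν i) * t)) :
    (fun t : ℝ ↦ ∑' i, w i * rexp (-(ν i) * t)) =O[atTop] fun t ↦ rexp (-1 * t) := by
  refine IsBigO.of_bound (rexp 1 * ∑' i, rexp (-(ν i) * 1)) ?_
  filter_upwards [eventually_ge_atTop (1 : ℝ)] with t ht
  have ht0 : 0 < t := by linarith
  refine (norm_weighted_tsum_exp_le hw hs ht0).trans ?_
  rw [Real.norm_eq_abs, abs_of_pos (Real.exp_pos _), ← tsum_mul_left, ← tsum_mul_right]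
  refine (hs t ht0).tsum_le_tsum (fun i ↦ ?_) (((hs 1 one_pos).mul_left _).mul_right _)
  rw [← Real.exp_add, ← Real.exp_add]
  have : (1 : ℝ) ≤ ν i := by exact_mod_cast hν i
  exact Real.exp_le_exp.mpr (by nlinarith)

theorem exists_continuation_of_tsum_exp [Countable ι] {ν : ι → ℕ} (hν : ∀ i, 1 ≤ ν i) {w : ι → ℂ}
    (hw : ∀ i, ‖w i‖ ≤ 1) (hs : ∀ t : ℝ, 0 < t → Summable fun i ↦ rexp (-(ν i) * t))
    (hν' : ∀ σ : ℝ, 1 < σ → Summable fun i ↦ (ν i : ℝ) ^ (-σ)) {κ : ℂ} {C : ℝ}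
    (hC : ∀ t : ℝ, 0 < t → t ≤ 1 → ‖(∑' i, w i * rexp (-(ν i) * t)) - κ / t‖ ≤ C) :
    ∃ E : ℂ → ℂ, DifferentiableOn ℂ E {s | 0 < s.re} ∧
      ∀ s : ℂ, 1 < s.re → ∑' i, w i * (ν i : ℂ) ^ (-s) = E s + κ / (s - 1) := by
  set F : ℝ → ℂ := fun t : ℝ ↦ ∑' i, w i * rexp (-(ν i) * t) with hF
  set g : ℝ → ℂ := fun t : ℝ ↦ (t : ℂ) ^ (-1 : ℂ) • (rexp (-t) : ℂ) with hg
  set f : ℝ → ℂ := fun t ↦ F t - κ * g t with hf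
  have hFcont : ContinuousOn F (Set.Ioi 0) := continuousOn_weighted_tsum_exp hw hs
  have hg_eq (t : ℝ) : g t = (rexp (-t) : ℂ) / t := by
    simp only [hg]
    rw [smul_eq_mul, Complex.cpow_neg_one, mul_comm, div_eq_mul_inv]
  have hgcont : ContinuousOn g (Set.Ioi 0) := by
    refine ContinuousOn.congr (f := fun t : ℝ ↦ (rexp (-t) : ℂ) / t) ?_ fun t _ ↦ hg_eq t
    refine ContinuousOn.div (by fun_prop) (by fun_prop) fun t ht ↦ ?_
    exact_mod_cast (ne_of_gt ht)
  have hFtop : F =O[atTop] fun t ↦ rexp (-1 * t) := weighted_tsum_exp_isBigO_atTop hν hw hs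
  have hgtop : g =O[atTop] fun t ↦ rexp (-1 * t) := by
    refine IsBigO.of_bound 1 ?_
    filter_upwards [eventually_ge_atTop (1 : ℝ)] with t ht
    have ht0 : 0 < t := by linarith
    rw [hg_eq, norm_div, Complex.norm_real, Complex.norm_real, Real.norm_eq_abs t, abs_of_pos ht0,
      one_mul, neg_one_mul]
    exact div_le_self (norm_nonneg _) ht
  have hftop : f =O[atTop] fun t ↦ rexp (-1 * t) := hFtop.sub (hgtop.const_mul_left κ)
  have hIoc : Set.Ioc (0 : ℝ) 1 ∈ 𝓝[>] (0 : ℝ) := Ioc_mem_nhdsGT one_pos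
  have hgbot : g =O[𝓝[>] 0] fun t : ℝ ↦ t ^ (-1 : ℝ) := by
    refine IsBigO.of_bound 1 ?_
    filter_upwards [hIoc] with t ht
    rw [hg_eq, norm_div, Complex.norm_real, Complex.norm_real, Real.norm_eq_abs t,
      abs_of_pos ht.1, one_mul, Real.rpow_neg_one, Real.norm_eq_abs, abs_of_pos (Real.exp_pos _),
      Real.norm_eq_abs, abs_of_pos (inv_pos.mpr ht.1), div_eq_mul_inv]
    exact mul_le_of_le_one_left (inv_pos.mpr ht.1).le (Real.exp_le_one_iff.mpr (by linarith [ht.1]))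
  have hfbot : f =O[𝓝[>] 0] fun t : ℝ ↦ t ^ (-0 : ℝ) := by
    refine IsBigO.of_bound (C + ‖κ‖) ?_
    filter_upwards [hIoc] with t ht
    have ht0 : (t : ℂ) ≠ 0 := by exact_mod_cast ht.1.ne'
    have e : f t = (F t - κ / t) + κ * ((1 - rexp (-t)) / t : ℝ) := by
      simp only [hf, hg_eq]; push_cast; field_simp; ring
    have hb : |(1 - rexp (-t)) / t| ≤ 1 := by
      have h1 : rexp (-t) ≤ 1 := Real.exp_le_one_iff.mpr (by linarith [ht.1])
      rw [abs_of_nonneg (div_nonneg (by linarith) ht.1.le), div_le_one ht.1]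
      linarith [Real.add_one_le_exp (-t)]
    rw [e, neg_zero, Real.rpow_zero, norm_one, mul_one]
    refine (norm_add_le _ _).trans (add_le_add (hC t ht.1 ht.2) ?_)
    rw [norm_mul, Complex.norm_real]
    exact mul_le_of_le_one_right (norm_nonneg _) hb
  have hFbot : F =O[𝓝[>] 0] fun t : ℝ ↦ t ^ (-1 : ℝ) := by
    have : (fun t : ℝ ↦ t ^ (-0 : ℝ)) =O[𝓝[>] 0] fun t : ℝ ↦ t ^ (-1 : ℝ) := by
      refine IsBigO.of_bound 1 ?_
      filter_upwards [hIoc] with t ht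
      rw [neg_zero, Real.rpow_zero, norm_one, one_mul, Real.rpow_neg_one, Real.norm_eq_abs,
        abs_of_pos (inv_pos.mpr ht.1)]
      exact (one_le_inv₀ ht.1).mpr ht.2
    refine ((hfbot.trans this).add (hgbot.const_mul_left κ)).congr_left fun t ↦ ?_
    simp only [hf]; ring
  have hlocF := hFcont.locallyIntegrableOn (μ := volume) measurableSet_Ioi
  have hlocg := hgcont.locallyIntegrableOn (μ := volume) measurableSet_Ioi
  have hlocf : LocallyIntegrableOn f (Set.Ioi 0) :=
    (hFcont.sub (continuousOn_const.mul hgcont)).locallyIntegrableOn measurableSet_Ioi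
  refine ⟨fun s ↦ mellin f s * (Complex.Gamma s)⁻¹, fun s hs0 ↦ ?_, fun s hs1 ↦ ?_⟩
  · exact ((mellin_differentiableAt_of_isBigO_rpow_exp one_pos hlocf hftop hfbot hs0).mul
      Complex.differentiable_one_div_Gamma.differentiableAt).differentiableWithinAt
  · have hs0 : 0 < s.re := by linarith
    have hMF : MellinConvergent F s :=
      mellinConvergent_of_isBigO_rpow_exp one_pos hlocF hFtop hFbot hs1
    have hMg : MellinConvergent g s :=
      mellinConvergent_of_isBigO_rpow_exp one_pos hlocg hgtop hgbot hs1
    have hmel : mellin F s = mellin f s + κ * Complex.Gamma (s - 1) := by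
      have h1 : mellin g s = Complex.Gamma (s - 1) := by
        rw [hg, mellin_cpow_smul, ← Complex.GammaIntegral_eq_mellin, ← sub_eq_add_neg,
          Complex.Gamma_eq_integral (by simpa using hs1)]
      have h2 := (hasMellin_sub hMF (hMg.const_smul κ)).2
      rw [mellin_const_smul, h1] at h2
      have h3 : mellin f s = mellin (fun t ↦ F t - κ • g t) s := rfl
      rw [h3, h2, smul_eq_mul]; ring
    have hsum : HasSum (fun i ↦ Complex.Gamma s * w i / ((ν i : ℝ) : ℂ) ^ s) (mellin F s) := by
      refine hasSum_mellin (fun i ↦ Or.inr (by exact_mod_cast hν i)) hs0 (fun t ht ↦ ?_) ?_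
      · refine Summable.hasSum (Summable.of_norm_bounded (hs t ht) fun i ↦ ?_)
        rw [norm_mul, Complex.norm_real, Real.norm_eq_abs, abs_of_pos (Real.exp_pos _)]
        exact mul_le_of_le_one_left (Real.exp_pos _).le (hw i)
      · refine Summable.of_nonneg_of_le (fun i ↦ by positivity) (fun i ↦ ?_) (hν' _ hs1)
        rw [Real.rpow_neg (Nat.cast_nonneg _), div_eq_mul_inv]
        exact mul_le_of_le_one_left (by positivity) (hw i)
    have hG : Complex.Gamma s ≠ 0 := Complex.Gamma_ne_zero_of_re_pos hs0
    have hs1' : s - 1 ≠ 0 := fun h ↦ by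
      rw [sub_eq_zero] at h; rw [h] at hs1; simp at hs1
    have hG1 : Complex.Gamma s = (s - 1) * Complex.Gamma (s - 1) := by
      simpa using Complex.Gamma_add_one (s - 1) hs1'
    have hG2 : Complex.Gamma (s - 1) ≠ 0 := fun h ↦ hG (by rw [hG1, h, mul_zero])
    have : Complex.Gamma s * ∑' i, w i * (ν i : ℂ) ^ (-s) = mellin F s := by
      rw [← hsum.tsum_eq, ← tsum_mul_left]
      refine tsum_congr fun i ↦ ?_
      rw [Complex.cpow_neg, Complex.ofReal_natCast]; ring
    beta_reduce
    rw [← mul_right_inj' hG, this, hmel, mul_add, mul_comm (mellin f s), ← mul_assoc,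
      mul_inv_cancel₀ hG, one_mul]
    congr 1
    rw [hG1]; field_simp

end MellinContinuation

section MultisetSeries

open Real Filter Topology

variable {P : Type*}

theorem hasSum_ite_lt_count [DecidableEq P] (f : P → ℂ) (s : Multiset P) :
    HasSum (fun q : P × ℕ ↦ if q.2 < s.count q.1 then f q.1 else 0) (s.map f).sum := by
  have h : (s.map f).sum = ∑ q ∈ s.toFinset ×ˢ Finset.range s.card,
      if q.2 < s.count q.1 then f q.1 else 0 := by
    rw [Finset.sum_multiset_map_count, Finset.sum_product]
    refine Finset.sum_congr rfl fun p _ ↦ ?_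
    dsimp only
    rw [← Finset.sum_filter, Finset.sum_const]
    congr 1
    rw [show (Finset.range s.card).filter (· < s.count p) = Finset.range (s.count p) by
      ext k
      simp only [Finset.mem_filter, Finset.mem_range, and_iff_right_iff_imp]
      exact fun hk ↦ hk.trans_le (Multiset.count_le_card p s), Finset.card_range]
  rw [h]
  refine hasSum_sum_of_ne_finset_zero fun q hq ↦ if_neg fun hlt ↦ hq ?_
  simp only [Finset.mem_product, Multiset.mem_toFinset, Finset.mem_range]
  exact ⟨Multiset.count_pos.mp (by omega), hlt.trans_le (Multiset.count_le_card _ _)⟩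

/-- The logarithmic derivative identity for Euler products: a completely multiplicative series
over multisets, multiplied by its weighted series over prime powers. -/
theorem tsum_primePow_mul_tsum_multiset {x : Multiset P → ℂ} (hx : ∀ s t, x (s + t) = x s * x t)
    {f : P → ℂ} (hsum : Summable fun s ↦ ‖x s‖)
    (hf : Summable fun q : P × ℕ ↦ ‖f q.1 * x (Multiset.replicate (q.2 + 1) q.1)‖) :
    (∑' q : P × ℕ, f q.1 * x (Multiset.replicate (q.2 + 1) q.1)) * ∑' s, x s =
      ∑' s : Multiset P, (s.map f).sum * x s := by
  classical
  rw [tsum_mul_tsum_of_summable_norm hf hsum]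
  have hprod := summable_mul_of_summable_norm hf hsum
  set F : (P × ℕ) × Multiset P → ℂ := fun r ↦
    if r.1.2 < r.2.count r.1.1 then f r.1.1 * x r.2 else 0 with hF
  set i : (P × ℕ) × Multiset P → (P × ℕ) × Multiset P := fun r ↦
    (r.1, Multiset.replicate (r.1.2 + 1) r.1.1 + r.2) with hi
  have hinj : Function.Injective i := by
    rintro ⟨q, s⟩ ⟨q', s'⟩ h
    obtain ⟨rfl, h⟩ := Prod.ext_iff.mp h
    exact Prod.ext rfl (add_left_cancel h)
  have hcomp (r) : F (i r) = f r.1.1 * x (Multiset.replicate (r.1.2 + 1) r.1.1) * x r.2 := by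
    simp only [hF, hi]
    rw [if_pos (by simp [Multiset.count_add]), hx, mul_assoc]
  have hrange (r) (hr : r ∉ Set.range i) : F r = 0 := by
    refine if_neg fun hlt ↦ hr ⟨(r.1, r.2 - Multiset.replicate (r.1.2 + 1) r.1.1), ?_⟩
    have : Multiset.replicate (r.1.2 + 1) r.1.1 ≤ r.2 := Multiset.le_count_iff_replicate_le.mp hlt
    exact Prod.ext rfl (add_tsub_cancel_of_le this)
  have hFsum : Summable F := by
    rw [← hinj.summable_iff hrange]
    exact hprod.congr fun r ↦ (hcomp r).symm
  have hFsum' : Summable (F ∘ Prod.swap) := (Equiv.prodComm _ _).summable_iff.mpr hFsum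
  calc _ = ∑' r, F (i r) := tsum_congr fun r ↦ (hcomp r).symm
    _ = ∑' r, F r := hinj.tsum_eq fun r hr ↦ by_contra fun h ↦ hr (hrange r h)
    _ = ∑' r, (F ∘ Prod.swap) r := ((Equiv.prodComm _ _).tsum_eq F).symm
    _ = ∑' s, ∑' q, (F ∘ Prod.swap) (s, q) := hFsum'.tsum_prod
    _ = _ := tsum_congr fun s ↦ by
      rw [← ((hasSum_ite_lt_count f s).mul_right (x s)).tsum_eq]
      refine tsum_congr fun q ↦ ?_
      simp only [hF, Function.comp_apply, Prod.swap_prod_mk]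
      split_ifs <;> simp

end MultisetSeries

section LogDerivativeSigns

open Real Filter Topology ComplexOrder

theorem iteratedDeriv_alternating_of_deriv_eq {H : ℂ → ℂ} {a : ℕ → ℂ} (ha : 0 ≤ a)
    (hH : DifferentiableOn ℂ H {s | 0 < s.re}) (habs : LSeries.abscissaOfAbsConv a ≤ 1)
    (hder : ∀ s : ℂ, 1 < s.re → deriv H s = -(LSeries a s * H s)) {x : ℝ} (hx : 1 < x)
    (hHx : H x ≠ 0) (n : ℕ) : 0 ≤ (-1) ^ n * (iteratedDeriv n H x / H x) := by
  have hlt : LSeries.abscissaOfAbsConv a < x := habs.trans_lt (by exact_mod_cast hx)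
  have hopen : IsOpen {s : ℂ | 0 < s.re} := isOpen_lt continuous_const Complex.continuous_re
  have hHan : AnalyticAt ℂ H x :=
    hH.analyticAt (hopen.mem_nhds (by simp; linarith))
  have hLan : AnalyticAt ℂ (LSeries a) x := LSeries_analyticOnNhd a x (by simpa using hlt)
  have hev : deriv H =ᶠ[𝓝 (x : ℂ)] fun s ↦ -(LSeries a * H) s := by
    have : {s : ℂ | 1 < s.re} ∈ 𝓝 (x : ℂ) :=
      (isOpen_lt continuous_const Complex.continuous_re).mem_nhds (by simpa using hx)
    filter_upwards [this] with s hs using hder s hs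
  induction n using Nat.strong_induction_on with
  | _ n ih =>
  rcases n with _ | n
  · simp [hHx]
  rw [iteratedDeriv_succ', hev.iteratedDeriv_eq, iteratedDeriv_fun_neg,
    iteratedDeriv_mul hLan.contDiffAt hHan.contDiffAt]
  have : (-1 : ℂ) ^ (n + 1) * (-(∑ i ∈ Finset.range (n + 1), (n.choose i : ℂ) *
      iteratedDeriv i (LSeries a) x * iteratedDeriv (n - i) H x) / H x) =
      ∑ i ∈ Finset.range (n + 1), (n.choose i : ℂ) * (((-1) ^ i * iteratedDeriv i (LSeries a) x) *
        ((-1) ^ (n - i) * (iteratedDeriv (n - i) H x / H x))) := by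
    rw [neg_div, mul_neg, pow_succ, mul_neg_one, neg_mul, neg_neg, Finset.sum_div, Finset.mul_sum]
    refine Finset.sum_congr rfl fun i hi ↦ ?_
    have : (-1 : ℂ) ^ n = (-1) ^ i * (-1) ^ (n - i) := by
      rw [← pow_add]; congr 1; have := Finset.mem_range.mp hi; omega
    rw [this]; ring
  rw [this]
  refine Finset.sum_nonneg fun i _ ↦ mul_nonneg (by exact_mod_cast Nat.zero_le _) (mul_nonneg
    (LSeries.iteratedDeriv_alternating ha hlt i) (ih _ (by omega)))

theorem one_le_div_of_deriv_eq_neg_lSeries_mul {H : ℂ → ℂ} {a : ℕ → ℂ} (ha : 0 ≤ a)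
    (hH : DifferentiableOn ℂ H {s | 0 < s.re}) (habs : LSeries.abscissaOfAbsConv a ≤ 1)
    (hder : ∀ s : ℂ, 1 < s.re → deriv H s = -(LSeries a s * H s)) {x y : ℝ} (hx : 1 < x)
    (hHx : H x ≠ 0) (hy : 0 < y) (hyx : y ≤ x) : 1 ≤ H y / H x := by
  set K : ℂ → ℂ := fun z ↦ H (-z) / H x - 1 with hK
  have hball : DifferentiableOn ℂ K (Metric.ball (-x : ℂ) x) := by
    refine DifferentiableOn.sub_const (DifferentiableOn.div_const (hH.comp
      differentiable_neg.differentiableOn fun z hz ↦ ?_) _) _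
    have h1 : |(z - (-x : ℂ)).re| < x := (Complex.abs_re_le_norm _).trans_lt (by
      simpa [dist_eq_norm] using hz)
    rw [sub_neg_eq_add, Complex.add_re, Complex.ofReal_re, abs_lt] at h1
    change 0 < (-z).re
    rw [Complex.neg_re]
    linarith
  have hnn (n : ℕ) : 0 ≤ iteratedDeriv n K (-x : ℂ) := by
    rcases n with _ | n
    · simp [hK, hHx]
    · have h := iteratedDeriv_alternating_of_deriv_eq ha hH habs hder hx hHx (n + 1)
      have e : iteratedDeriv (n + 1) K (-x : ℂ) =
          (-1) ^ (n + 1) * (iteratedDeriv (n + 1) H x / H x) := by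
        rw [iteratedDeriv_succ', show deriv K = deriv (fun z ↦ H (-z) / H x) from
          funext fun z ↦ deriv_sub_const _, ← iteratedDeriv_succ', iteratedDeriv_div_const,
          iteratedDeriv_comp_neg]
        simp [mul_div_assoc]
      rwa [e]
  have := hball.nonneg_of_iteratedDeriv_nonneg hnn (z := (-y : ℂ))
    (by exact_mod_cast neg_le_neg hyx) (by
      rw [Metric.mem_ball, dist_eq_norm, show (-y : ℂ) - -x = ((x - y : ℝ) : ℂ) by push_cast; ring,
        Complex.norm_real, Real.norm_eq_abs, abs_of_nonneg (by linarith)]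
      linarith)
  simpa [hK] using this

end LogDerivativeSigns

section

open Real Filter Topology ComplexOrder

section IndexedDirichletSeriesDeriv

variable {ι : Type*}

theorem abscissaOfAbsConv_fiberSum_le {ν : ι → ℕ} (hν : ∀ i, 1 ≤ ν i) {w : ι → ℂ}
    (hs : ∀ σ : ℝ, 1 < σ → Summable fun i ↦ ‖w i‖ * (ν i : ℝ) ^ (-σ)) :
    LSeries.abscissaOfAbsConv (fiberSum ν w) ≤ 1 := by
  refine LSeries.abscissaOfAbsConv_le_of_forall_lt_LSeriesSummable (x := 1) fun y hy ↦ ?_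
  exact (lSeriesHasSum_fiberSum hν (s := y) (by simpa using hs y hy)).LSeriesSummable

theorem lSeries_fiberSum_eq {ν : ι → ℕ} (hν : ∀ i, 1 ≤ ν i) {w : ι → ℂ}
    (hs : ∀ σ : ℝ, 1 < σ → Summable fun i ↦ ‖w i‖ * (ν i : ℝ) ^ (-σ)) {s : ℂ} (h1 : 1 < s.re) :
    LSeries (fiberSum ν w) s = ∑' i, w i * (ν i : ℂ) ^ (-s) :=
  (lSeriesHasSum_fiberSum hν (hs _ h1)).LSeries_eq

theorem hasDerivAt_tsum_cpow_neg {ν : ι → ℕ} (hν : ∀ i, 1 ≤ ν i) {w : ι → ℂ}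
    (hw : ∀ i, ‖w i‖ ≤ 1) (hs : ∀ σ : ℝ, 1 < σ → Summable fun i ↦ (ν i : ℝ) ^ (-σ)) {s : ℂ}
    (h1 : 1 < s.re) :
    HasDerivAt (fun z : ℂ ↦ ∑' i, w i * (ν i : ℂ) ^ (-z))
      (-∑' i, (Real.log (ν i) * w i) * (ν i : ℂ) ^ (-s)) s := by
  have hs' (σ : ℝ) (hσ : 1 < σ) : Summable fun i ↦ ‖w i‖ * (ν i : ℝ) ^ (-σ) :=
    Summable.of_nonneg_of_le (fun i ↦ by positivity)
      (fun i ↦ mul_le_of_le_one_left (by positivity) (hw i)) (hs σ hσ)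
  have hlog (σ : ℝ) (hσ : 1 < σ) :
      Summable fun i ↦ ‖(Real.log (ν i) : ℂ) * w i‖ * (ν i : ℝ) ^ (-σ) := by
    refine Summable.of_nonneg_of_le (fun i ↦ by positivity) (fun i ↦ ?_)
      (summable_log_mul_rpow_neg hν hs hσ)
    rw [norm_mul, Complex.norm_real, Real.norm_eq_abs,
      abs_of_nonneg (Real.log_nonneg (by exact_mod_cast hν i))]
    gcongr
    exact mul_le_of_le_one_right (Real.log_nonneg (by exact_mod_cast hν i)) (hw i)
  have habs : LSeries.abscissaOfAbsConv (fiberSum ν w) < s.re :=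
    (abscissaOfAbsConv_fiberSum_le hν hs').trans_lt (by exact_mod_cast h1)
  have h := LSeries_hasDerivAt habs
  rw [← fiberSum_log_mul, lSeries_fiberSum_eq hν hlog h1] at h
  refine h.congr_of_eventuallyEq ?_
  filter_upwards [(isOpen_lt continuous_const Complex.continuous_re).mem_nhds h1] with z hz
  exact (lSeries_fiberSum_eq hν hs' hz).symm

theorem tendsto_tsum_cpow_neg_atTop {ν : ι → ℕ} (hν : ∀ i, 1 ≤ ν i) {w : ι → ℂ}
    (hs : ∀ σ : ℝ, 1 < σ → Summable fun i ↦ ‖w i‖ * (ν i : ℝ) ^ (-σ)) :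
    Tendsto (fun x : ℝ ↦ ∑' i, w i * (ν i : ℂ) ^ (-x : ℂ)) atTop (𝓝 (fiberSum ν w 1)) := by
  refine (LSeries.tendsto_atTop ((abscissaOfAbsConv_fiberSum_le hν hs).trans_lt
    (by exact EReal.coe_lt_top 1))).congr' ?_
  filter_upwards [eventually_gt_atTop 1] with x hx
  exact lSeries_fiberSum_eq hν hs (by simpa using hx)

end IndexedDirichletSeriesDeriv

section ClassLSeries

variable {P G : Type*}

/-- The norm of a multiset, thought of as a factorization into primes of norm `N p`. -/
def multisetNorm (N : P → ℕ) (s : Multiset P) : ℕ := (s.map N).prod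

theorem multisetNorm_add (N : P → ℕ) (s t : Multiset P) :
    multisetNorm N (s + t) = multisetNorm N s * multisetNorm N t := by
  simp [multisetNorm]

theorem multisetNorm_replicate (N : P → ℕ) (n : ℕ) (p : P) :
    multisetNorm N (Multiset.replicate n p) = N p ^ n := by
  simp [multisetNorm]

theorem one_le_multisetNorm {N : P → ℕ} (hN : ∀ p, 2 ≤ N p) (s : Multiset P) :
    1 ≤ multisetNorm N s := by
  refine Multiset.one_le_prod_of_one_le fun n hn ↦ ?_
  obtain ⟨p, _, rfl⟩ := Multiset.mem_map.mp hn
  exact one_le_two.trans (hN p)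

theorem multisetNorm_eq_one_iff {N : P → ℕ} (hN : ∀ p, 2 ≤ N p) {s : Multiset P} :
    multisetNorm N s = 1 ↔ s = 0 := by
  refine ⟨fun h ↦ ?_, fun h ↦ by simp [h, multisetNorm]⟩
  by_contra hs
  obtain ⟨p, hp⟩ := Multiset.exists_mem_of_ne_zero hs
  obtain ⟨t, rfl⟩ := Multiset.exists_cons_of_mem hp
  rw [multisetNorm, Multiset.map_cons, Multiset.prod_cons] at h
  have := Nat.eq_one_of_mul_eq_one_right h
  have := hN p
  omega

theorem log_multisetNorm {N : P → ℕ} (hN : ∀ p, 2 ≤ N p) (s : Multiset P) :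
    (s.map fun p ↦ (Real.log (N p) : ℂ)).sum = (Real.log (multisetNorm N s) : ℂ) := by
  induction s using Multiset.induction_on with
  | empty => simp [multisetNorm]
  | cons p s ih =>
    have h1 : (N p : ℝ) ≠ 0 := by have := hN p; positivity
    have h2 : (multisetNorm N s : ℝ) ≠ 0 := by
      have := one_le_multisetNorm hN s; positivity
    rw [Multiset.map_cons, Multiset.sum_cons, ih, ← Complex.ofReal_add, ← Real.log_mul h1 h2]
    simp [multisetNorm]

theorem replicate_succ_injective :
    Function.Injective fun q : P × ℕ ↦ Multiset.replicate (q.2 + 1) q.1 := by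
  rintro ⟨p, k⟩ ⟨p', k'⟩ h
  have h1 := congrArg Multiset.card h
  have h2 : p ∈ Multiset.replicate (k' + 1) p' := by
    rw [← show Multiset.replicate (k + 1) p = Multiset.replicate (k' + 1) p' from h]; simp
  simp only [Multiset.card_replicate, Nat.add_right_cancel_iff] at h1
  rw [h1, Multiset.eq_of_mem_replicate h2]

theorem summable_primePow_rpow_neg {N : P → ℕ}
    (hs : ∀ σ : ℝ, 1 < σ → Summable fun a ↦ (multisetNorm N a : ℝ) ^ (-σ)) (σ : ℝ) (hσ : 1 < σ) :
    Summable fun q : P × ℕ ↦ ((N q.1 ^ (q.2 + 1) : ℕ) : ℝ) ^ (-σ) := by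
  refine ((hs σ hσ).comp_injective replicate_succ_injective).congr fun q ↦ ?_
  rw [Function.comp_apply, multisetNorm_replicate]

theorem one_le_primePow {N : P → ℕ} (hN : ∀ p, 2 ≤ N p) (q : P × ℕ) : 1 ≤ N q.1 ^ (q.2 + 1) :=
  Nat.one_le_pow _ _ (by have := hN q.1; omega)

theorem log_nonneg_of_two_le {N : P → ℕ} (hN : ∀ p, 2 ≤ N p) (p : P) : 0 ≤ Real.log (N p) :=
  Real.log_nonneg (by exact_mod_cast one_le_two.trans (hN p))

theorem summable_log_mul_primePow_rpow_neg {N : P → ℕ} (hN : ∀ p, 2 ≤ N p)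
    (hs : ∀ σ : ℝ, 1 < σ → Summable fun a ↦ (multisetNorm N a : ℝ) ^ (-σ)) (σ : ℝ) (hσ : 1 < σ) :
    Summable fun q : P × ℕ ↦ Real.log (N q.1) * ((N q.1 ^ (q.2 + 1) : ℕ) : ℝ) ^ (-σ) := by
  refine Summable.of_nonneg_of_le (fun q ↦ ?_) (fun q ↦ ?_)
    (summable_log_mul_rpow_neg (one_le_primePow hN) (summable_primePow_rpow_neg hs) hσ)
  · have := log_nonneg_of_two_le hN q.1
    positivity
  · gcongr
    · have := hN q.1; positivity
    · exact Nat.le_self_pow (by omega) _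

variable [AddCommGroup G]

/-- The `L`-series attached to a character `ψ` of the class group `G`, as a series over multisets
of primes. -/
noncomputable def classLSeries (N : P → ℕ) (c : P → G) (ψ : AddChar G ℂ) (s : ℂ) : ℂ :=
  ∑' a : Multiset P, ψ (a.map c).sum * (multisetNorm N a : ℂ) ^ (-s)

/-- The negative logarithmic derivative of `classLSeries`, as a series over prime powers. -/
noncomputable def classLogDeriv (N : P → ℕ) (c : P → G) (ψ : AddChar G ℂ) (s : ℂ) : ℂ :=
  ∑' q : P × ℕ, (Real.log (N q.1) * ψ ((q.2 + 1) • c q.1)) * ((N q.1 ^ (q.2 + 1) : ℕ) : ℂ) ^ (-s)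

variable [Finite G]

theorem hasDerivAt_classLSeries {N : P → ℕ} (hN : ∀ p, 2 ≤ N p) (c : P → G) (ψ : AddChar G ℂ)
    (hs : ∀ σ : ℝ, 1 < σ → Summable fun a ↦ (multisetNorm N a : ℝ) ^ (-σ)) {s : ℂ}
    (h1 : 1 < s.re) :
    HasDerivAt (classLSeries N c ψ) (-(classLogDeriv N c ψ s * classLSeries N c ψ s)) s := by
  have h := hasDerivAt_tsum_cpow_neg (one_le_multisetNorm hN)
    (w := fun a : Multiset P ↦ ψ (a.map c).sum) (fun a ↦ (AddChar.norm_apply ψ _).le) hs h1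
  set x : Multiset P → ℂ := fun a ↦ ψ (a.map c).sum * (multisetNorm N a : ℂ) ^ (-s) with hx
  have hmul (a b : Multiset P) : x (a + b) = x a * x b := by
    simp only [hx]
    rw [Multiset.map_add, Multiset.sum_add, AddChar.map_add_eq_mul, multisetNorm_add, Nat.cast_mul,
      Complex.natCast_mul_natCast_cpow]
    ring
  have hnorm : Summable fun a ↦ ‖x a‖ := by
    refine (hs _ h1).congr fun a ↦ ?_
    rw [norm_mul, AddChar.norm_apply, one_mul,
      Complex.norm_natCast_cpow_of_pos (one_le_multisetNorm hN a), Complex.neg_re]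
  have hnorm' : Summable fun q : P × ℕ ↦
      ‖(Real.log (N q.1) : ℂ) * x (Multiset.replicate (q.2 + 1) q.1)‖ := by
    refine (summable_log_mul_primePow_rpow_neg hN hs _ h1).congr fun q ↦ ?_
    rw [norm_mul, norm_mul, AddChar.norm_apply, one_mul, multisetNorm_replicate,
      Complex.norm_natCast_cpow_of_pos (one_le_primePow hN q), Complex.neg_re, Complex.norm_real,
      Real.norm_eq_abs, abs_of_nonneg (log_nonneg_of_two_le hN _)]
  have hΛ : classLogDeriv N c ψ s =
      ∑' q : P × ℕ, (Real.log (N q.1) : ℂ) * x (Multiset.replicate (q.2 + 1) q.1) := by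
    refine tsum_congr fun q ↦ ?_
    simp only [hx]
    rw [multisetNorm_replicate, Multiset.map_replicate, Multiset.sum_replicate, mul_assoc]
  have key : classLogDeriv N c ψ s * classLSeries N c ψ s =
      ∑' a : Multiset P,
        (Real.log (multisetNorm N a) * ψ (a.map c).sum) * (multisetNorm N a : ℂ) ^ (-s) := by
    rw [hΛ]
    refine (tsum_primePow_mul_tsum_multiset (f := fun p ↦ (Real.log (N p) : ℂ))
      hmul hnorm hnorm').trans (tsum_congr fun a ↦ ?_)
    rw [log_multisetNorm hN, mul_assoc]
  rw [key]
  exact h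

theorem tendsto_classLSeries_atTop {N : P → ℕ} (hN : ∀ p, 2 ≤ N p) (c : P → G) (ψ : AddChar G ℂ)
    (hs : ∀ σ : ℝ, 1 < σ → Summable fun a ↦ (multisetNorm N a : ℝ) ^ (-σ)) :
    Tendsto (fun x : ℝ ↦ classLSeries N c ψ x) atTop (𝓝 1) := by
  have h := tendsto_tsum_cpow_neg_atTop (one_le_multisetNorm hN)
    (w := fun a : Multiset P ↦ ψ (a.map c).sum) fun σ hσ ↦ (hs σ hσ).congr fun a ↦ by
      rw [AddChar.norm_apply, one_mul]
  have e : fiberSum (multisetNorm N) (fun a : Multiset P ↦ ψ (a.map c).sum) 1 = 1 := by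
    rw [fiberSum, tsum_eq_single ⟨0, by simp [multisetNorm]⟩]
    · simp
    · rintro ⟨a, ha⟩ hne
      exact absurd (Subtype.ext ((multisetNorm_eq_one_iff hN).mp ha)) hne
  rwa [e] at h

end ClassLSeries

end

section PrimeSums

open Real Filter Topology ComplexOrder

variable {P : Type*}

theorem summable_log_mul_rpow_neg_two {N : P → ℕ} (hN : ∀ p, 2 ≤ N p)
    (hs : ∀ σ : ℝ, 1 < σ → Summable fun a ↦ (multisetNorm N a : ℝ) ^ (-σ)) :
    Summable fun p ↦ Real.log (N p) * ((N p : ℝ) ^ 2)⁻¹ := by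
  have hinj : Function.Injective fun p : P ↦ (p, 0) := fun p p' h ↦ (Prod.ext_iff.mp h).1
  refine ((summable_log_mul_primePow_rpow_neg hN hs 2 one_lt_two).comp_injective hinj).congr
    fun p ↦ ?_
  simp only [Function.comp_apply, zero_add, pow_one]
  rw [Real.rpow_neg (Nat.cast_nonneg _)]
  norm_cast

open Classical in
theorem summable_primePow_of_summable_prime {N : P → ℕ} (hN : ∀ p, 2 ≤ N p)
    (hs : ∀ σ : ℝ, 1 < σ → Summable fun a ↦ (multisetNorm N a : ℝ) ^ (-σ)) {S : Set (P × ℕ)}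
    (hS : Summable fun p ↦ if (p, 0) ∈ S then Real.log (N p) / N p else 0) :
    Summable fun q : P × ℕ ↦ if q ∈ S then Real.log (N q.1) / (N q.1 : ℝ) ^ (q.2 + 1) else 0 := by
  have hgeo : Summable fun q : P × ℕ ↦
      Real.log (N q.1) * ((N q.1 : ℝ) ^ 2)⁻¹ * (1 / 2) ^ q.2 :=
    (summable_log_mul_rpow_neg_two hN hs).mul_of_nonneg summable_geometric_two
      (fun p ↦ mul_nonneg (log_nonneg_of_two_le hN p) (by positivity)) fun k ↦ by positivity
  have hnn (q : P × ℕ) : 0 ≤ if q ∈ S then Real.log (N q.1) / (N q.1 : ℝ) ^ (q.2 + 1) else 0 := by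
    have := log_nonneg_of_two_le hN q.1
    split_ifs <;> positivity
  refine (summable_prod_of_nonneg hnn).mpr ?_
  have hle (p : P) (k : ℕ) : (if (p, k + 1) ∈ S then Real.log (N p) / (N p : ℝ) ^ (k + 1 + 1)
      else 0) ≤ Real.log (N p) * ((N p : ℝ) ^ 2)⁻¹ * (1 / 2) ^ k := by
    have hlog := log_nonneg_of_two_le hN p
    split_ifs
    · have h2 : (2 : ℝ) ≤ N p := by exact_mod_cast hN p
      rw [show k + 1 + 1 = 2 + k by ring, pow_add, div_eq_mul_inv, mul_inv, mul_assoc]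
      gcongr
      rw [one_div, inv_pow]
      gcongr
    · positivity
  have hfib (p : P) : Summable fun k : ℕ ↦
      if (p, k + 1) ∈ S then Real.log (N p) / (N p : ℝ) ^ (k + 1 + 1) else 0 :=
    Summable.of_nonneg_of_le (fun k ↦ hnn (p, k + 1)) (hle p) (summable_geometric_two.mul_left _)
  have hfib' (p : P) : Summable fun k : ℕ ↦
      if (p, k) ∈ S then Real.log (N p) / (N p : ℝ) ^ (k + 1) else 0 :=
    (summable_nat_add_iff 1).mp (hfib p)
  refine ⟨hfib', ?_⟩
  have htail : Summable fun p : P ↦ ∑' k : ℕ,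
      if (p, k + 1) ∈ S then Real.log (N p) / (N p : ℝ) ^ (k + 1 + 1) else 0 := by
    refine Summable.of_nonneg_of_le (fun p ↦ tsum_nonneg fun k ↦ hnn (p, k + 1)) (fun p ↦ ?_)
      ((summable_log_mul_rpow_neg_two hN hs).mul_right 2)
    refine ((hfib p).tsum_le_tsum (hle p) (summable_geometric_two.mul_left _)).trans_eq ?_
    rw [tsum_mul_left, tsum_geometric_two]
  refine (hS.add htail).congr fun p ↦ ?_
  rw [(hfib' p).tsum_eq_zero_add]
  simp

open Classical in
/-- If the primes of a family have convergent `∑ log N p / N p`, the corresponding series over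
prime powers has no pole at `1`. -/
theorem tendsto_sub_one_mul_primePow_tsum {N : P → ℕ} (hN : ∀ p, 2 ≤ N p)
    (hs : ∀ σ : ℝ, 1 < σ → Summable fun a ↦ (multisetNorm N a : ℝ) ^ (-σ)) {S : Set (P × ℕ)}
    (hS : Summable fun p ↦ if (p, 0) ∈ S then Real.log (N p) / N p else 0) :
    Tendsto (fun x : ℝ ↦ (x - 1 : ℂ) * ∑' q : P × ℕ,
      if q ∈ S then (Real.log (N q.1) : ℂ) * ((N q.1 ^ (q.2 + 1) : ℕ) : ℂ) ^ (-x : ℂ) else 0)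
      (𝓝[>] 1) (𝓝 0) := by
  have hsum := summable_primePow_of_summable_prime hN hs hS
  set B := ∑' q : P × ℕ, if q ∈ S then Real.log (N q.1) / (N q.1 : ℝ) ^ (q.2 + 1) else 0
  have hlim : Tendsto (fun x : ℝ ↦ |x - 1| * B) (𝓝[>] 1) (𝓝 0) := by
    have : Continuous fun x : ℝ ↦ |x - 1| * B := by fun_prop
    exact (tendsto_nhdsWithin_of_tendsto_nhds (by simpa using this.tendsto 1))
  refine squeeze_zero_norm' ?_ hlim
  filter_upwards [self_mem_nhdsWithin] with x hx
  rw [norm_mul, show (x - 1 : ℂ) = ((x - 1 : ℝ) : ℂ) by push_cast; rfl, Complex.norm_real,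
    Real.norm_eq_abs]
  refine mul_le_mul_of_nonneg_left (tsum_of_norm_bounded hsum.hasSum fun q ↦ ?_) (abs_nonneg _)
  split_ifs
  · rw [norm_mul, Complex.norm_real, Real.norm_eq_abs, abs_of_nonneg (log_nonneg_of_two_le hN _),
      Complex.norm_natCast_cpow_of_pos (one_le_primePow hN q), div_eq_mul_inv]
    refine mul_le_mul_of_nonneg_left ?_ (log_nonneg_of_two_le hN _)
    rw [Complex.neg_re, Complex.ofReal_re, Real.rpow_neg (Nat.cast_nonneg _)]
    have h1 : (1 : ℝ) ≤ ((N q.1 ^ (q.2 + 1) : ℕ) : ℝ) := by exact_mod_cast one_le_primePow hN q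
    have h2 := Real.rpow_le_rpow_of_exponent_le h1 (le_of_lt hx)
    rw [Real.rpow_one] at h2
    have h0 : (0 : ℝ) < ((N q.1 ^ (q.2 + 1) : ℕ) : ℝ) := by linarith
    calc _ ≤ (((N q.1 ^ (q.2 + 1) : ℕ) : ℝ))⁻¹ := by gcongr
      _ = _ := by push_cast; rfl
  · simp

theorem tendsto_sub_one_mul_logDeriv {Z : ℂ → ℂ} (hZ : AnalyticAt ℂ Z 1) (h1 : Z 1 ≠ 0) :
    Tendsto (fun x : ℝ ↦ (x - 1 : ℂ) * (deriv Z x / Z x)) (𝓝[>] 1) (𝓝 0) := by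
  have hc : ContinuousAt (fun s : ℂ ↦ (s - 1) * (deriv Z s / Z s)) 1 :=
    (by fun_prop : ContinuousAt (fun s : ℂ ↦ s - 1) 1).mul
      (hZ.deriv.continuousAt.div hZ.continuousAt h1)
  have h := hc.tendsto
  rw [sub_self, zero_mul] at h
  have hcoe : Tendsto (fun x : ℝ ↦ (x : ℂ)) (𝓝[>] 1) (𝓝 1) :=
    tendsto_nhdsWithin_of_tendsto_nhds (by simpa using Complex.continuous_ofReal.tendsto 1)
  exact h.comp hcoe

end PrimeSums

section Nonvanishing

open Real Filter Topology ComplexOrder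

variable {P G : Type*} [AddCommGroup G]

/-- `Z ψ` continues the `L`-series of `ψ` to the right half plane, after removing the simple pole
of the trivial character. -/
structure IsClassContinuation (N : P → ℕ) (c : P → G) (Z : AddChar G ℂ → ℂ → ℂ) : Prop where
  differentiableOn : ∀ ψ, DifferentiableOn ℂ (Z ψ) {s | 0 < s.re}
  eq_of_ne : ∀ ψ, ψ ≠ 0 → ∀ s : ℂ, 1 < s.re → Z ψ s = classLSeries N c ψ s
  eq_zero : ∀ s : ℂ, 1 < s.re → Z 0 s = (s - 1) * classLSeries N c 0 s
  ne_zero : Z 0 1 ≠ 0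

theorem IsClassContinuation.analyticAt {N : P → ℕ} {c : P → G} {Z : AddChar G ℂ → ℂ → ℂ}
    (hZ : IsClassContinuation N c Z) (ψ : AddChar G ℂ) {s : ℂ} (hs : 0 < s.re) :
    AnalyticAt ℂ (Z ψ) s :=
  (hZ.differentiableOn ψ).analyticAt
    ((isOpen_lt continuous_const Complex.continuous_re).mem_nhds hs)

theorem tendsto_ofReal_nhdsGT_one : Tendsto (fun x : ℝ ↦ (x : ℂ)) (𝓝[>] 1) (𝓝 1) :=
  tendsto_nhdsWithin_of_tendsto_nhds (by simpa using Complex.continuous_ofReal.tendsto 1)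

variable [Finite G]

theorem tendsto_classLogDeriv_of_ne_zero {N : P → ℕ} (hN : ∀ p, 2 ≤ N p) {c : P → G}
    (hs : ∀ σ : ℝ, 1 < σ → Summable fun a ↦ (multisetNorm N a : ℝ) ^ (-σ))
    {Z : AddChar G ℂ → ℂ → ℂ} (hZ : IsClassContinuation N c Z) {ψ : AddChar G ℂ} (hψ : ψ ≠ 0)
    (h1 : Z ψ 1 ≠ 0) :
    Tendsto (fun x : ℝ ↦ (x - 1 : ℂ) * classLogDeriv N c ψ x) (𝓝[>] 1) (𝓝 0) := by
  have han := hZ.analyticAt ψ (s := 1) (by simp)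
  have hne : ∀ᶠ x : ℝ in 𝓝[>] 1, Z ψ x ≠ 0 :=
    tendsto_ofReal_nhdsGT_one.eventually (han.continuousAt.eventually_ne h1)
  rw [← neg_zero]
  refine (tendsto_sub_one_mul_logDeriv han h1).neg.congr' ?_
  filter_upwards [hne, self_mem_nhdsWithin] with x hx hx1
  have hx1' : 1 < (x : ℂ).re := hx1
  have hd : HasDerivAt (Z ψ) _ (x : ℂ) :=
    (hasDerivAt_classLSeries hN c ψ hs hx1').congr_of_eventuallyEq (by
      filter_upwards [(isOpen_lt continuous_const Complex.continuous_re).mem_nhds hx1'] with z hz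
        using hZ.eq_of_ne ψ hψ z hz)
  rw [hd.deriv, ← hZ.eq_of_ne ψ hψ _ hx1']
  field_simp

theorem tendsto_classLogDeriv_zero {N : P → ℕ} (hN : ∀ p, 2 ≤ N p) {c : P → G}
    (hs : ∀ σ : ℝ, 1 < σ → Summable fun a ↦ (multisetNorm N a : ℝ) ^ (-σ))
    {Z : AddChar G ℂ → ℂ → ℂ} (hZ : IsClassContinuation N c Z) :
    Tendsto (fun x : ℝ ↦ (x - 1 : ℂ) * classLogDeriv N c 0 x) (𝓝[>] 1) (𝓝 1) := by
  have han := hZ.analyticAt 0 (s := 1) (by simp)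
  have hne : ∀ᶠ x : ℝ in 𝓝[>] 1, Z 0 x ≠ 0 :=
    tendsto_ofReal_nhdsGT_one.eventually (han.continuousAt.eventually_ne hZ.ne_zero)
  rw [← sub_zero (1 : ℂ)]
  refine ((tendsto_sub_one_mul_logDeriv han hZ.ne_zero).const_sub 1).congr' ?_
  filter_upwards [hne, self_mem_nhdsWithin] with x hx hx1
  have hx1' : 1 < (x : ℂ).re := hx1
  have hd : HasDerivAt (Z 0) _ (x : ℂ) :=
    (((hasDerivAt_id (x : ℂ)).sub_const 1).mul
      (hasDerivAt_classLSeries hN c 0 hs hx1')).congr_of_eventuallyEq (by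
      filter_upwards [(isOpen_lt continuous_const Complex.continuous_re).mem_nhds hx1'] with z hz
        using hZ.eq_zero z hz)
  rw [hZ.eq_zero _ hx1'] at hx
  have hxa := left_ne_zero_of_mul hx
  have hxb := right_ne_zero_of_mul hx
  rw [hd.deriv, hZ.eq_zero _ hx1']
  simp only [id]
  field_simp
  ring

open Classical in
theorem sum_mul_classLogDeriv [Fintype G] {N : P → ℕ} (hN : ∀ p, 2 ≤ N p) {c : P → G}
    (hs : ∀ σ : ℝ, 1 < σ → Summable fun a ↦ (multisetNorm N a : ℝ) ^ (-σ)) (g : G) {s : ℂ}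
    (h1 : 1 < s.re) :
    ∑ ψ : AddChar G ℂ, ψ (-g) * classLogDeriv N c ψ s = Fintype.card G * ∑' q : P × ℕ,
      if q ∈ {q : P × ℕ | (q.2 + 1) • c q.1 = g} then
        (Real.log (N q.1) : ℂ) * ((N q.1 ^ (q.2 + 1) : ℕ) : ℂ) ^ (-s) else 0 := by
  have hsum (ψ : AddChar G ℂ) : Summable fun q : P × ℕ ↦ ψ (-g) *
      ((Real.log (N q.1) * ψ ((q.2 + 1) • c q.1)) * ((N q.1 ^ (q.2 + 1) : ℕ) : ℂ) ^ (-s)) := by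
    refine Summable.of_norm ((summable_log_mul_primePow_rpow_neg hN hs _ h1).congr fun q ↦ ?_)
    rw [norm_mul, norm_mul, norm_mul, AddChar.norm_apply, AddChar.norm_apply, one_mul, mul_one,
      Complex.norm_natCast_cpow_of_pos (one_le_primePow hN q), Complex.neg_re, Complex.norm_real,
      Real.norm_eq_abs, abs_of_nonneg (log_nonneg_of_two_le hN _)]
  simp only [classLogDeriv, ← tsum_mul_left]
  rw [← Summable.tsum_finsetSum fun ψ _ ↦ hsum ψ]
  refine tsum_congr fun q ↦ ?_
  have := AddChar.sum_apply_eq_ite ((q.2 + 1) • c q.1 - g)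
  rw [sub_eq_zero] at this
  calc _ = (∑ ψ : AddChar G ℂ, ψ ((q.2 + 1) • c q.1 - g)) *
        ((Real.log (N q.1) : ℂ) * ((N q.1 ^ (q.2 + 1) : ℕ) : ℂ) ^ (-s)) := by
        rw [Finset.sum_mul]
        refine Finset.sum_congr rfl fun ψ _ ↦ ?_
        rw [sub_eq_add_neg, AddChar.map_add_eq_mul]; ring
    _ = _ := by
        rw [this]
        by_cases h : (q.2 + 1) • c q.1 = g <;> simp [h]

theorem hasDerivAt_prod_classLSeries {N : P → ℕ} (hN : ∀ p, 2 ≤ N p) (c : P → G)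
    (hs : ∀ σ : ℝ, 1 < σ → Summable fun a ↦ (multisetNorm N a : ℝ) ^ (-σ))
    (T : Finset (AddChar G ℂ)) {s : ℂ} (h1 : 1 < s.re) :
    HasDerivAt (fun z ↦ ∏ ψ ∈ T, classLSeries N c ψ z)
      (-((∑ ψ ∈ T, classLogDeriv N c ψ s) * ∏ ψ ∈ T, classLSeries N c ψ s)) s := by
  classical
  induction T using Finset.induction_on with
  | empty => simpa using hasDerivAt_const s (1 : ℂ)
  | insert ψ T hψ ih =>
    simp only [Finset.prod_insert hψ, Finset.sum_insert hψ]
    refine ((hasDerivAt_classLSeries hN c ψ hs h1).mul ih).congr_deriv ?_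
    ring

end Nonvanishing

section PrimesInClasses

open Real Filter Topology ComplexOrder

variable {P G : Type*} [AddCommGroup G]

/-- If the continued `L`-function of `ψ₁` vanished at `1`, the product of all `L`-functions would
be holomorphic on the right half plane. -/
theorem exists_holomorphic_prod_classLSeries [Fintype G] {N : P → ℕ} {c : P → G}
    {Z : AddChar G ℂ → ℂ → ℂ} (hZ : IsClassContinuation N c Z) {ψ₁ : AddChar G ℂ} (hψ₁ : ψ₁ ≠ 0)
    (h1 : Z ψ₁ 1 = 0) :
    ∃ F : ℂ → ℂ, DifferentiableOn ℂ F {s | 0 < s.re} ∧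
      ∀ s : ℂ, 1 < s.re → F s = ∏ ψ : AddChar G ℂ, classLSeries N c ψ s := by
  classical
  have hmem : {s : ℂ | 0 < s.re} ∈ 𝓝 (1 : ℂ) :=
    (isOpen_lt continuous_const Complex.continuous_re).mem_nhds (by simp)
  refine ⟨fun s ↦ Z 0 s * (dslope (Z ψ₁) 1 s *
    ∏ ψ ∈ (Finset.univ.erase (0 : AddChar G ℂ)).erase ψ₁, Z ψ s), ?_, fun s hs ↦ ?_⟩
  · exact (hZ.differentiableOn 0).mul (((Complex.differentiableOn_dslope hmem).mpr
      (hZ.differentiableOn ψ₁)).mul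
        (DifferentiableOn.fun_finsetProd fun ψ _ ↦ hZ.differentiableOn ψ))
  · have hs1 : s - 1 ≠ 0 := fun h ↦ by
      rw [sub_eq_zero] at h; rw [h] at hs; simp at hs
    have hs1' : s ≠ 1 := sub_ne_zero.mp hs1
    beta_reduce
    rw [← Finset.mul_prod_erase Finset.univ _ (Finset.mem_univ (0 : AddChar G ℂ)),
      ← Finset.mul_prod_erase (Finset.univ.erase (0 : AddChar G ℂ)) _
        (Finset.mem_erase.mpr ⟨hψ₁, Finset.mem_univ _⟩), dslope_of_ne _ hs1', slope_def_field, h1,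
      hZ.eq_zero s hs, hZ.eq_of_ne ψ₁ hψ₁ s hs,
      Finset.prod_congr rfl fun ψ hψ ↦ hZ.eq_of_ne ψ
        (Finset.ne_of_mem_erase (Finset.mem_of_mem_erase hψ)) s hs]
    field_simp
    ring

open Classical in
theorem lSeries_primePow_coeff_nonneg [Fintype G] {N : P → ℕ} (hN : ∀ p, 2 ≤ N p) {c : P → G}
    (hs : ∀ σ : ℝ, 1 < σ → Summable fun a ↦ (multisetNorm N a : ℝ) ^ (-σ)) (T : Finset P) :
    ∃ a : ℕ → ℂ, 0 ≤ a ∧ LSeries.abscissaOfAbsConv a ≤ 1 ∧ ∀ s : ℂ, 1 < s.re →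
      LSeries a s = (∑ ψ : AddChar G ℂ, classLogDeriv N c ψ s) -
        ∑ p ∈ T, (Real.log (N p ^ Fintype.card G : ℕ) : ℂ) *
          ((N p ^ Fintype.card G : ℕ) : ℂ) ^ (-s) := by
  set h := Fintype.card G with hh
  have hpos : 0 < h := Fintype.card_pos
  set u : P × ℕ → ℝ := fun q ↦ if (q.2 + 1) • c q.1 = 0 then h * Real.log (N q.1) else 0 with hu
  set u' : P × ℕ → ℝ := fun q ↦ if q ∈ T ×ˢ {h - 1} then h * Real.log (N q.1) else 0 with hu'
  have hlog := log_nonneg_of_two_le hN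
  have hle (q : P × ℕ) : u' q ≤ u q := by
    simp only [hu, hu']
    split_ifs with h1 h2 h2
    · exact le_rfl
    · have : q.2 + 1 = h := by
        rw [Finset.mem_product, Finset.mem_singleton] at h1; omega
      exact absurd (by rw [this]; exact card_nsmul_eq_zero) h2
    · have := hlog q.1; positivity
    · exact le_rfl
  have hu'0 (q : P × ℕ) : 0 ≤ u' q := by
    have := hlog q.1
    simp only [hu']; split_ifs <;> positivity
  have hub (q : P × ℕ) : u q ≤ h * Real.log (N q.1) := by
    have := hlog q.1
    simp only [hu]; split_ifs
    · exact le_rfl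
    · positivity
  have hbound (σ : ℝ) (hσ : 1 < σ) (v : P × ℕ → ℝ) (hv0 : ∀ q, 0 ≤ v q) (hv : ∀ q, v q ≤ u q) :
      Summable fun q : P × ℕ ↦ ‖(v q : ℂ)‖ * ((N q.1 ^ (q.2 + 1) : ℕ) : ℝ) ^ (-σ) := by
    refine Summable.of_nonneg_of_le (fun q ↦ by positivity) (fun q ↦ ?_)
      ((summable_log_mul_primePow_rpow_neg hN hs σ hσ).mul_left (h : ℝ))
    rw [Complex.norm_real, Real.norm_eq_abs, abs_of_nonneg (hv0 q), ← mul_assoc]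
    gcongr
    exact (hv q).trans (hub q)
  have hterm (s : ℂ) (h1 : 1 < s.re) (v : P × ℕ → ℝ) (hv0 : ∀ q, 0 ≤ v q) (hv : ∀ q, v q ≤ u q) :
      Summable fun q : P × ℕ ↦ (v q : ℂ) * ((N q.1 ^ (q.2 + 1) : ℕ) : ℂ) ^ (-s) := by
    refine Summable.of_norm ((hbound s.re h1 v hv0 hv).congr fun q ↦ ?_)
    rw [norm_mul, Complex.norm_natCast_cpow_of_pos (one_le_primePow hN q), Complex.neg_re]
  have hv0 (q) : 0 ≤ u q - u' q := sub_nonneg.mpr (hle q)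
  have hv (q) : u q - u' q ≤ u q := sub_le_self _ (hu'0 q)
  refine ⟨fiberSum (fun q : P × ℕ ↦ N q.1 ^ (q.2 + 1)) fun q ↦ ((u q - u' q : ℝ) : ℂ), fun n ↦ ?_,
    abscissaOfAbsConv_fiberSum_le (one_le_primePow hN) fun σ hσ ↦ hbound σ hσ _ hv0 hv,
    fun s h1 ↦ ?_⟩
  · obtain ⟨r, hr, e⟩ := fiberSum_nonneg (fun q : P × ℕ ↦ N q.1 ^ (q.2 + 1)) hv0 n
    rw [e]
    exact Complex.zero_le_real.mpr hr
  · rw [lSeries_fiberSum_eq (one_le_primePow hN) (fun σ hσ ↦ hbound σ hσ _ hv0 hv) h1]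
    simp only [Complex.ofReal_sub, sub_mul]
    rw [Summable.tsum_sub (hterm s h1 u (fun q ↦ (hu'0 q).trans (hle q)) fun q ↦ le_rfl)
      (hterm s h1 u' hu'0 hle)]
    congr 1
    · have := sum_mul_classLogDeriv hN (c := c) hs 0 h1
      simp only [neg_zero, AddChar.map_zero_eq_one, one_mul] at this
      rw [this, ← tsum_mul_left]
      refine tsum_congr fun q ↦ ?_
      simp only [hu]
      by_cases h : (q.2 + 1) • c q.1 = 0 <;> simp [h, mul_assoc, hh]
    · rw [tsum_eq_sum (s := T ×ˢ {h - 1}) fun q hq ↦ by simp only [hu', if_neg hq]; simp,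
        Finset.sum_product]
      refine Finset.sum_congr rfl fun p hp ↦ ?_
      rw [Finset.sum_singleton]
      simp only [hu']
      rw [if_pos (by simp [hp]), Nat.sub_add_cancel hpos, Nat.cast_pow, Nat.cast_pow, Real.log_pow]

/-- A nontrivial character has nonvanishing `L`-function at `1`. -/
theorem classContinuation_one_ne_zero [Finite G] {N : P → ℕ} (hN : ∀ p, 2 ≤ N p) {c : P → G}
    (hs : ∀ σ : ℝ, 1 < σ → Summable fun a ↦ (multisetNorm N a : ℝ) ^ (-σ))
    {Z : AddChar G ℂ → ℂ → ℂ} (hZ : IsClassContinuation N c Z) {ψ₁ : AddChar G ℂ} (hψ₁ : ψ₁ ≠ 0) :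
    Z ψ₁ 1 ≠ 0 := by
  classical
  intro h1
  have := Fintype.ofFinite G
  obtain ⟨F, hFd, hF⟩ := exists_holomorphic_prod_classLSeries hZ hψ₁ h1
  set h := Fintype.card G with hh
  have hpos : 0 < h := Fintype.card_pos
  obtain ⟨x, hx1, hx⟩ : ∃ x : ℝ, 1 < x ∧ ∀ ψ : AddChar G ℂ, classLSeries N c ψ x ≠ 0 :=
    ((eventually_gt_atTop 1).and (eventually_all.mpr fun ψ ↦
      (tendsto_classLSeries_atTop hN c ψ hs).eventually_ne one_ne_zero)).exists
  have hFx : F x ≠ 0 := by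
    rw [hF x (by simpa using hx1)]
    exact Finset.prod_ne_zero_iff.mpr fun ψ _ ↦ hx ψ
  set y : ℝ := 1 / (2 * h) with hy
  have hy0 : 0 < y := by positivity
  have hy1 : y ≤ 1 := by
    rw [hy, div_le_one (by positivity)]
    have : (1 : ℝ) ≤ h := by exact_mod_cast hpos
    linarith
  have hone (p : P) : 1 ≤ N p ^ h := Nat.one_le_pow _ _ (by have := hN p; omega)
  have hpsum : Summable fun p ↦ ((N p ^ h : ℕ) : ℝ) ^ (-x) := by
    have hinj : Function.Injective fun p : P ↦ (p, h - 1) := fun p p' h ↦ (Prod.ext_iff.mp h).1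
    refine ((summable_primePow_rpow_neg hs x hx1).comp_injective hinj).congr fun p ↦ ?_
    simp only [Function.comp_apply]
    rw [Nat.sub_add_cancel hpos]
  set Q := ∑' p, ((N p ^ h : ℕ) : ℝ) ^ (-x) with hQ
  have hkey (T : Finset P) :
      ∑ p ∈ T, ((N p ^ h : ℕ) : ℝ) ^ (-y) ≤ ‖F y‖ / ‖F x‖ * rexp Q := by
    obtain ⟨a, ha, habs, haL⟩ := lSeries_primePow_coeff_nonneg (c := c) hN hs T
    set l : ℂ → ℂ := fun s ↦ ∑ p ∈ T, ((N p ^ h : ℕ) : ℂ) ^ (-s) with hl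
    have hlreal (z : ℝ) : l z = ((∑ p ∈ T, ((N p ^ h : ℕ) : ℝ) ^ (-z) : ℝ) : ℂ) := by
      simp only [hl]
      rw [Complex.ofReal_sum]
      refine Finset.sum_congr rfl fun p _ ↦ ?_
      rw [Complex.ofReal_cpow (Nat.cast_nonneg _)]
      simp
    have hld (s : ℂ) : HasDerivAt l (-∑ p ∈ T, (Real.log (N p ^ h : ℕ) : ℂ) *
        ((N p ^ h : ℕ) : ℂ) ^ (-s)) s := by
      rw [← Finset.sum_neg_distrib]
      refine HasDerivAt.fun_sum fun p _ ↦ ?_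
      refine ((hasDerivAt_neg s).const_cpow (Or.inl ?_)).congr_deriv ?_
      · have := hone p
        exact_mod_cast (by omega : N p ^ h ≠ 0)
      · rw [Complex.ofReal_log (Nat.cast_nonneg _), Complex.ofReal_natCast]; ring
    set H : ℂ → ℂ := fun s ↦ F s * Complex.exp (-l s) with hH
    have hHd : DifferentiableOn ℂ H {s | 0 < s.re} := hFd.mul fun s _ ↦
      ((hld s).neg.cexp.differentiableAt.differentiableWithinAt)
    have hHder (s : ℂ) (hs1 : 1 < s.re) : deriv H s = -(LSeries a s * H s) := by
      have hFder : HasDerivAt F _ s :=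
        (hasDerivAt_prod_classLSeries hN c hs Finset.univ hs1).congr_of_eventuallyEq (by
          filter_upwards [(isOpen_lt continuous_const Complex.continuous_re).mem_nhds hs1]
            with z hz using hF z hz)
      have hHd' : HasDerivAt H _ s := hFder.mul (hld s).neg.cexp
      rw [hHd'.deriv, haL s hs1]
      simp only [hH, Pi.neg_apply]
      rw [hF s hs1]
      ring
    have hHx : H x ≠ 0 := mul_ne_zero hFx (Complex.exp_ne_zero _)
    have h3 := one_le_div_of_deriv_eq_neg_lSeries_mul ha hHd habs hHder hx1 hHx hy0
      (hy1.trans hx1.le)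
    have h4 : 1 ≤ ‖H y‖ / ‖H x‖ := by
      rw [← norm_div]
      exact (Complex.le_def.mp h3).1.trans (Complex.re_le_norm _)
    rw [one_le_div (norm_pos_iff.mpr hHx)] at h4
    simp only [hH] at h4
    rw [hlreal, hlreal, norm_mul, norm_mul, ← Complex.ofReal_neg, ← Complex.ofReal_neg,
      Complex.norm_exp_ofReal, Complex.norm_exp_ofReal] at h4
    have h5 : ∑ p ∈ T, ((N p ^ h : ℕ) : ℝ) ^ (-x) ≤ Q :=
      hpsum.sum_le_tsum T fun p _ ↦ by positivity
    set A := ∑ p ∈ T, ((N p ^ h : ℕ) : ℝ) ^ (-y)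
    have h6 : ‖F x‖ * rexp (-Q) ≤ ‖F y‖ * rexp (-A) := le_trans (by gcongr) h4
    have hFx' : 0 < ‖F x‖ := norm_pos_iff.mpr hFx
    have h7 : rexp A ≤ ‖F y‖ / ‖F x‖ * rexp Q := by
      rw [Real.exp_neg, Real.exp_neg, ← div_eq_mul_inv, ← div_eq_mul_inv,
        div_le_div_iff₀ (Real.exp_pos _) (Real.exp_pos _)] at h6
      rw [div_mul_eq_mul_div, le_div_iff₀ hFx']
      linarith
    linarith [Real.add_one_le_exp A]
  have hhalf : Summable fun p ↦ ((N p ^ h : ℕ) : ℝ) ^ (-y) :=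
    summable_of_sum_le (fun p ↦ by positivity) hkey
  have hlogsum : Summable fun p ↦ Real.log (N p) / N p := by
    refine Summable.of_nonneg_of_le (fun p ↦ div_nonneg (log_nonneg_of_two_le hN p)
      (Nat.cast_nonneg _)) (fun p ↦ ?_) (hhalf.mul_left 2)
    have h0 : (0 : ℝ) < N p := by have := hN p; positivity
    have e : ((N p ^ h : ℕ) : ℝ) ^ (-y) = (N p : ℝ) ^ (-(1 / 2) : ℝ) := by
      rw [Nat.cast_pow, ← Real.rpow_natCast, ← Real.rpow_mul h0.le]
      congr 1
      rw [hy]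
      field_simp
    rw [e, div_le_iff₀ h0]
    have h2 := Real.log_le_rpow_div h0.le (show (0 : ℝ) < 1 / 2 by norm_num)
    have h3 : (N p : ℝ) ^ (-(1 / 2) : ℝ) * N p = (N p : ℝ) ^ (1 / 2 : ℝ) := by
      nth_rewrite 2 [← Real.rpow_one (N p : ℝ)]
      rw [← Real.rpow_add h0]
      norm_num
    rw [mul_assoc, h3]
    linarith
  have hlim := tendsto_sub_one_mul_primePow_tsum hN hs (S := Set.univ) (by simpa using hlogsum)
  refine zero_ne_one (tendsto_nhds_unique hlim ?_)
  refine (tendsto_classLogDeriv_zero hN hs hZ).congr fun z ↦ ?_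
  simp [classLogDeriv]

/-- Primes are equidistributed over the classes at least to the extent that `∑ log N p / N p`
diverges over every class. -/
theorem not_summable_log_div_of_isClassContinuation [Finite G] {N : P → ℕ} (hN : ∀ p, 2 ≤ N p)
    {c : P → G} (hs : ∀ σ : ℝ, 1 < σ → Summable fun a ↦ (multisetNorm N a : ℝ) ^ (-σ))
    {Z : AddChar G ℂ → ℂ → ℂ} (hZ : IsClassContinuation N c Z) (g : G) :
    ¬ Summable fun p : {p // c p = g} ↦ Real.log (N p) / N p := by
  classical
  intro hsum
  have := Fintype.ofFinite G
  have hS : Summable fun p ↦ if (p, 0) ∈ {q : P × ℕ | (q.2 + 1) • c q.1 = g} then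
      Real.log (N p) / N p else 0 := by
    have h := summable_subtype_iff_indicator (s := {p | c p = g})
      (f := fun p ↦ Real.log (N p) / N p) |>.mp hsum
    refine h.congr fun p ↦ ?_
    simp [Set.indicator_apply]
  have hlim := (tendsto_sub_one_mul_primePow_tsum hN hs hS).const_mul (Fintype.card G : ℂ)
  rw [mul_zero] at hlim
  have hlim' : Tendsto (fun x : ℝ ↦ ∑ ψ : AddChar G ℂ,
      ψ (-g) * ((x - 1 : ℂ) * classLogDeriv N c ψ x)) (𝓝[>] 1)
      (𝓝 (∑ ψ : AddChar G ℂ, ψ (-g) * if ψ = 0 then 1 else 0)) := by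
    refine tendsto_finsetSum _ fun ψ _ ↦ Tendsto.const_mul _ ?_
    split_ifs with h
    · subst h
      exact tendsto_classLogDeriv_zero hN hs hZ
    · exact tendsto_classLogDeriv_of_ne_zero hN hs hZ h (classContinuation_one_ne_zero hN hs hZ h)
  have e : ∑ ψ : AddChar G ℂ, (ψ (-g) * if ψ = 0 then 1 else 0) = 1 := by simp
  rw [e] at hlim'
  refine zero_ne_one (tendsto_nhds_unique hlim (hlim'.congr' ?_))
  filter_upwards [self_mem_nhdsWithin] with x hx
  have hx' : 1 < (x : ℂ).re := hx
  have h := sum_mul_classLogDeriv hN (c := c) hs g hx'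
  rw [mul_left_comm]
  refine Eq.trans ?_ (congrArg ((x - 1 : ℂ) * ·) h)
  rw [Finset.mul_sum]
  refine Finset.sum_congr rfl fun ψ _ ↦ ?_
  ring

end PrimesInClasses

section ThetaCriterion

open Real Filter Topology ComplexOrder

theorem tsum_mul_eq_sum_mul_tsum_fiber {ι G : Type*} [Fintype G] (k : ι → G) (w : G → ℂ)
    {f : ι → ℝ} (hf : Summable f) :
    ∑' i, w (k i) * f i = ∑ g, w g * ((∑' i : {i // k i = g}, f i : ℝ) : ℂ) := by
  have hsum : Summable fun i ↦ w (k i) * f i := by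
    obtain ⟨B, hB⟩ := (Set.finite_range fun g ↦ ‖w g‖).bddAbove
    refine Summable.of_norm_bounded (hf.norm.mul_left B) fun i ↦ ?_
    rw [norm_mul, Complex.norm_real]
    gcongr
    exact hB ⟨k i, rfl⟩
  rw [← (Equiv.sigmaFiberEquiv k).tsum_eq fun i ↦ w (k i) * f i]
  refine ((Equiv.sigmaFiberEquiv k).summable_iff.mpr hsum).tsum_sigma.trans ?_
  rw [tsum_fintype]
  refine Finset.sum_congr rfl fun g _ ↦ ?_
  rw [Complex.ofReal_tsum, ← tsum_mul_left]
  refine tsum_congr fun i ↦ ?_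
  simp [Equiv.sigmaFiberEquiv, i.2]

variable {P G : Type*} [AddCommGroup G] [Finite G]

theorem summable_multisetNorm_rpow_neg {N : P → ℕ} (hN : ∀ p, 2 ≤ N p) {c : P → G}
    (hexp : ∀ t : ℝ, 0 < t → Summable fun a ↦ rexp (-(multisetNorm N a) * t)) {κ C : ℝ}
    (hC : ∀ (g : G) (t : ℝ), 0 < t → t ≤ 1 → |(∑' a : {a : Multiset P // (a.map c).sum = g},
      rexp (-(multisetNorm N a) * t)) - κ / t| ≤ C) (σ : ℝ) (hσ : 1 < σ) :
    Summable fun a ↦ (multisetNorm N a : ℝ) ^ (-σ) := by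
  have := Fintype.ofFinite G
  refine summable_rpow_neg_of_tsum_exp_le (one_le_multisetNorm hN) hexp
    (C := Fintype.card G * (κ + C)) (fun t ht ht1 ↦ ?_) hσ
  have hC0 : 0 ≤ C := (abs_nonneg _).trans (hC 0 t ht ht1)
  have h := tsum_mul_eq_sum_mul_tsum_fiber (fun a : Multiset P ↦ (a.map c).sum) 1 (hexp t ht)
  simp only [Pi.one_apply, one_mul, ← Complex.ofReal_tsum, ← Complex.ofReal_sum,
    Complex.ofReal_inj] at h
  rw [h]
  refine (Finset.sum_le_card_nsmul _ _ ((κ + C) / t) fun g _ ↦ ?_).trans_eq ?_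
  · have h1 := (abs_le.mp (hC g t ht ht1)).2
    have h2 : C ≤ C / t := by rw [le_div_iff₀ ht]; exact mul_le_of_le_one_right hC0 ht1
    rw [add_div]
    linarith
  · rw [nsmul_eq_mul, Finset.card_univ, mul_div_assoc]

theorem exists_isClassContinuation [Countable P] {N : P → ℕ} (hN : ∀ p, 2 ≤ N p) {c : P → G}
    (hexp : ∀ t : ℝ, 0 < t → Summable fun a ↦ rexp (-(multisetNorm N a) * t)) {κ C : ℝ}
    (hκ : 0 < κ)
    (hC : ∀ (g : G) (t : ℝ), 0 < t → t ≤ 1 → |(∑' a : {a : Multiset P // (a.map c).sum = g},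
      rexp (-(multisetNorm N a) * t)) - κ / t| ≤ C) :
    ∃ Z : AddChar G ℂ → ℂ → ℂ, IsClassContinuation N c Z := by
  classical
  have := Fintype.ofFinite G
  have hpt : ∀ ψ : AddChar G ℂ, ∃ E : ℂ → ℂ, DifferentiableOn ℂ E {s | 0 < s.re} ∧
      ∀ s : ℂ, 1 < s.re → classLSeries N c ψ s =
        E s + (if ψ = 0 then (Fintype.card G * κ : ℂ) else 0) / (s - 1) := by
    intro ψ
    refine exists_continuation_of_tsum_exp (C := Fintype.card G * C) (one_le_multisetNorm hN)
      (w := fun a : Multiset P ↦ ψ (a.map c).sum) (fun a ↦ (AddChar.norm_apply ψ _).le) hexp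
      (summable_multisetNorm_rpow_neg hN hexp hC) fun t ht ht1 ↦ ?_
    have e : (if ψ = 0 then (Fintype.card G * κ : ℂ) else 0) / t =
        ∑ g, ψ g * ((κ / t : ℝ) : ℂ) := by
      rw [← Finset.sum_mul, AddChar.sum_eq_ite]
      split_ifs <;> simp [mul_div_assoc]
    rw [tsum_mul_eq_sum_mul_tsum_fiber (fun a : Multiset P ↦ (a.map c).sum) ψ (hexp t ht), e,
      ← Finset.sum_sub_distrib]
    refine (norm_sum_le_of_le _ fun g _ ↦ ?_).trans_eq
      (by rw [Finset.sum_const, nsmul_eq_mul, Finset.card_univ])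
    rw [← mul_sub, norm_mul, AddChar.norm_apply, one_mul, ← Complex.ofReal_sub, Complex.norm_real,
      Real.norm_eq_abs]
    exact hC g t ht ht1
  choose E hE hEL using hpt
  refine ⟨fun ψ s ↦ if ψ = 0 then (s - 1) * E ψ s + Fintype.card G * κ else E ψ s,
    fun ψ ↦ ?_, fun ψ hψ s hs ↦ ?_, fun s hs ↦ ?_, ?_⟩
  · by_cases hψ : ψ = 0
    · simp only [hψ, if_true]
      exact (((differentiable_id.sub_const 1).differentiableOn).mul (hE 0)).add_const _
    · simp only [hψ, if_false]
      exact hE ψ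
  · simp [hEL ψ s hs, hψ]
  · have hs1 : s - 1 ≠ 0 := fun h ↦ by
      rw [sub_eq_zero] at h; rw [h] at hs; simp at hs
    simp only [hEL 0 s hs, if_true]
    field_simp
  · simp [ne_of_gt hκ]

/-- Primes in classes, from an asymptotic count of the multisets of primes in each class. -/
theorem not_summable_log_div_of_tsum_exp [Countable P] {N : P → ℕ} (hN : ∀ p, 2 ≤ N p)
    {c : P → G} (hexp : ∀ t : ℝ, 0 < t → Summable fun a ↦ rexp (-(multisetNorm N a) * t))
    {κ C : ℝ} (hκ : 0 < κ)
    (hC : ∀ (g : G) (t : ℝ), 0 < t → t ≤ 1 → |(∑' a : {a : Multiset P // (a.map c).sum = g},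
      rexp (-(multisetNorm N a) * t)) - κ / t| ≤ C) (g : G) :
    ¬ Summable fun p : {p // c p = g} ↦ Real.log (N p) / N p := by
  obtain ⟨Z, hZ⟩ := exists_isClassContinuation hN hexp hκ hC
  exact not_summable_log_div_of_isClassContinuation hN
    (summable_multisetNorm_rpow_neg hN hexp hC) hZ g

end ThetaCriterion

section RayClass

open IsDedekindDomain

variable {R : Type*} [CommRing R] {m : R}

/-- The height one primes of `R` that do not contain `m`. -/
abbrev PrimeTo (m : R) : Type _ := {v : HeightOneSpectrum R // m ∉ v.asIdeal}

/-- The product of a multiset of primes not containing `m`. -/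
def idealOf (s : Multiset (PrimeTo m)) : Ideal R := (s.map fun v ↦ v.1.asIdeal).prod

theorem idealOf_zero : idealOf (0 : Multiset (PrimeTo m)) = 1 := by
  simp [idealOf]

theorem idealOf_add (s t : Multiset (PrimeTo m)) : idealOf (s + t) = idealOf s * idealOf t := by
  simp [idealOf]

theorem idealOf_singleton (v : PrimeTo m) : idealOf {v} = v.1.asIdeal := by
  simp [idealOf]

theorem isCoprime_span_of_dvd_sub_one {γ : R} (h : m ∣ γ - 1) :
    IsCoprime (Ideal.span {γ}) (Ideal.span {m}) := by
  rw [Ideal.isCoprime_span_singleton_iff]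
  obtain ⟨k, hk⟩ := h
  exact ⟨1, -k, by linear_combination hk⟩

theorem dvd_mul_sub_one {α β : R} (hα : m ∣ α - 1) (hβ : m ∣ β - 1) : m ∣ α * β - 1 := by
  obtain ⟨k, hk⟩ := hα
  obtain ⟨l, hl⟩ := hβ
  exact ⟨k * β + l, by linear_combination β * hk + hl⟩

theorem exists_mem_dvd_sub_one {I : Ideal R} (hI : I ≠ ⊥) (h : IsCoprime I (Ideal.span {m})) :
    ∃ γ ∈ I, γ ≠ 0 ∧ m ∣ γ - 1 := by
  obtain ⟨i, hi, j, hj, hij⟩ := Ideal.isCoprime_iff_exists.1 h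
  rw [Ideal.mem_span_singleton] at hj
  rcases eq_or_ne i 0 with rfl | h0
  · obtain ⟨γ, hγ, hγ0⟩ := Submodule.exists_mem_ne_zero_of_ne_bot hI
    refine ⟨γ, hγ, hγ0, ?_⟩
    rw [zero_add] at hij
    exact (hij ▸ hj).trans (one_dvd _)
  · exact ⟨i, hi, h0, by rw [← hij]; simpa using hj⟩

variable [IsDedekindDomain R]

theorem idealOf_ne_bot (s : Multiset (PrimeTo m)) : idealOf s ≠ ⊥ := by
  refine Multiset.prod_ne_zero fun h ↦ ?_
  obtain ⟨v, -, hv⟩ := Multiset.mem_map.1 h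
  exact v.1.ne_bot hv

theorem isCoprime_idealOf (s : Multiset (PrimeTo m)) :
    IsCoprime (idealOf s) (Ideal.span {m}) := by
  induction s using Multiset.induction_on with
  | empty => rw [idealOf_zero]; exact isCoprime_one_left
  | cons v s ih =>
    rw [← Multiset.singleton_add, idealOf_add, idealOf_singleton]
    refine IsCoprime.mul_left ?_ ih
    rw [Ideal.isCoprime_iff_sup_eq]
    refine v.1.isMaximal.1.2 _ (lt_of_le_of_ne le_sup_left fun h ↦ v.2 ?_)
    rw [h]
    exact Ideal.mem_sup_right (Ideal.mem_span_singleton_self m)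

theorem idealOf_injective : Function.Injective (idealOf : Multiset (PrimeTo m) → Ideal R) := by
  intro s t h
  have key (s : Multiset (PrimeTo m)) : UniqueFactorizationMonoid.normalizedFactors (idealOf s)
      = s.map fun v ↦ v.1.asIdeal := by
    refine UniqueFactorizationMonoid.normalizedFactors_prod_of_prime fun p hp ↦ ?_
    obtain ⟨v, -, rfl⟩ := Multiset.mem_map.1 hp
    exact v.1.prime
  have h2 : s.map (fun v ↦ v.1.asIdeal) = t.map fun v ↦ v.1.asIdeal := by
    rw [← key, ← key, h]
  refine Multiset.map_injective (fun v w hvw ↦ ?_) h2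
  exact Subtype.ext (HeightOneSpectrum.ext hvw)

theorem exists_idealOf_eq {I : Ideal R} (hI : I ≠ ⊥) (h : IsCoprime I (Ideal.span {m})) :
    ∃ s : Multiset (PrimeTo m), idealOf s = I := by
  have hf : ∀ p ∈ UniqueFactorizationMonoid.normalizedFactors I,
      ∃ v : PrimeTo m, v.1.asIdeal = p := by
    intro p hp
    have hp' := UniqueFactorizationMonoid.prime_of_normalized_factor p hp
    have hd := UniqueFactorizationMonoid.dvd_of_mem_normalizedFactors hp
    refine ⟨⟨⟨p, Ideal.isPrime_of_prime hp', hp'.ne_zero⟩, fun hm ↦ ?_⟩, rfl⟩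
    rw [Ideal.isCoprime_iff_sup_eq] at h
    refine (Ideal.isPrime_of_prime hp').ne_top (top_le_iff.1 (h ▸ sup_le ?_ ?_))
    · exact Ideal.le_of_dvd hd
    · exact (Ideal.span_singleton_le_iff_mem _).2 hm
  choose f hf using hf
  refine ⟨(UniqueFactorizationMonoid.normalizedFactors I).attach.map fun p ↦ f p.1 p.2, ?_⟩
  rw [idealOf, Multiset.map_map]
  conv_rhs => rw [← Ideal.prod_normalizedFactors_eq_self hI,
    ← Multiset.attach_map_val (UniqueFactorizationMonoid.normalizedFactors I)]
  congr 1
  exact Multiset.map_congr rfl fun p _ ↦ hf p.1 p.2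

theorem exists_idealOf_mul_eq_span (s : Multiset (PrimeTo m)) :
    ∃ t : Multiset (PrimeTo m), ∃ γ : R, γ ≠ 0 ∧ m ∣ γ - 1 ∧
      idealOf s * idealOf t = Ideal.span {γ} := by
  obtain ⟨γ, hγ, hγ0, hγ1⟩ := exists_mem_dvd_sub_one (idealOf_ne_bot s) (isCoprime_idealOf s)
  obtain ⟨J, hJ⟩ := Ideal.dvd_span_singleton.2 hγ
  have hJ0 : J ≠ ⊥ := by
    rintro rfl
    rw [Ideal.mul_bot, Ideal.span_singleton_eq_bot] at hJ
    exact hγ0 hJ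
  have hJm : IsCoprime J (Ideal.span {m}) := by
    have := isCoprime_span_of_dvd_sub_one hγ1
    rw [hJ] at this
    exact this.of_mul_left_right
  obtain ⟨t, rfl⟩ := exists_idealOf_eq hJ0 hJm
  exact ⟨t, γ, hγ0, hγ1, hJ.symm⟩

/-- Equivalence of ideals prime to `m` up to principal ideals generated by elements congruent to
`1` modulo `m`. -/
def rayCon (m : R) : AddCon (Multiset (PrimeTo m)) where
  r s t := ∃ α β : R, α ≠ 0 ∧ β ≠ 0 ∧ m ∣ α - 1 ∧ m ∣ β - 1 ∧
    Ideal.span {α} * idealOf s = Ideal.span {β} * idealOf t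
  iseqv :=
    { refl := fun s ↦ ⟨1, 1, one_ne_zero, one_ne_zero, by simp, by simp, rfl⟩
      symm := fun ⟨α, β, h1, h2, h3, h4, h5⟩ ↦ ⟨β, α, h2, h1, h4, h3, h5.symm⟩
      trans := by
        rintro s t u ⟨α, β, h1, h2, h3, h4, h5⟩ ⟨α', β', h1', h2', h3', h4', h5'⟩
        refine ⟨α * α', β * β', mul_ne_zero h1 h1', mul_ne_zero h2 h2', dvd_mul_sub_one h3 h3',
          dvd_mul_sub_one h4 h4', ?_⟩
        rw [← Ideal.span_singleton_mul_span_singleton, ← Ideal.span_singleton_mul_span_singleton,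
          mul_right_comm, h5, mul_right_comm, mul_assoc, mul_assoc, ← h5', mul_left_comm] }
  add' := by
    rintro s t u v ⟨α, β, h1, h2, h3, h4, h5⟩ ⟨α', β', h1', h2', h3', h4', h5'⟩
    refine ⟨α * α', β * β', mul_ne_zero h1 h1', mul_ne_zero h2 h2', dvd_mul_sub_one h3 h3',
          dvd_mul_sub_one h4 h4', ?_⟩
    rw [← Ideal.span_singleton_mul_span_singleton, ← Ideal.span_singleton_mul_span_singleton,
      idealOf_add, idealOf_add, mul_mul_mul_comm, h5, h5', mul_mul_mul_comm]

theorem rayCon_iff {s t : Multiset (PrimeTo m)} : rayCon m s t ↔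
    ∃ α β : R, α ≠ 0 ∧ β ≠ 0 ∧ m ∣ α - 1 ∧ m ∣ β - 1 ∧
      Ideal.span {α} * idealOf s = Ideal.span {β} * idealOf t := Iff.rfl

/-- The ray class group modulo `m` (with no condition at infinite places). -/
abbrev RayClassGroup (m : R) : Type _ := (rayCon m).Quotient

/-- The ray class of a product of primes. -/
def rayClass (s : Multiset (PrimeTo m)) : RayClassGroup m := (s : (rayCon m).Quotient)

theorem rayClass_eq {s t : Multiset (PrimeTo m)} :
    rayClass s = rayClass t ↔ rayCon m s t := AddCon.eq _

theorem rayClass_add (s t : Multiset (PrimeTo m)) :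
    rayClass (s + t) = rayClass s + rayClass t := rfl

theorem rayClass_eq_zero_of_span {s : Multiset (PrimeTo m)} {γ : R} (h0 : γ ≠ 0) (h1 : m ∣ γ - 1)
    (h : idealOf s = Ideal.span {γ}) : rayClass s = 0 := by
  change rayClass s = rayClass 0
  rw [rayClass_eq, rayCon_iff]
  refine ⟨1, γ, one_ne_zero, h0, by simp, h1, ?_⟩
  rw [idealOf_zero, h, mul_one, Ideal.span_singleton_one, Ideal.top_mul]

theorem exists_add_eq_zero (g : RayClassGroup m) :
    ∃ h : RayClassGroup m, h + g = 0 := by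
  induction g using AddCon.induction_on with | H s => ?_
  obtain ⟨t, γ, h0, h1, h⟩ := exists_idealOf_mul_eq_span s
  refine ⟨rayClass t, ?_⟩
  change rayClass (t + s) = 0
  rw [add_comm]
  exact rayClass_eq_zero_of_span h0 h1 (by rw [idealOf_add, h])

noncomputable instance : Neg (RayClassGroup m) :=
  ⟨fun g ↦ (exists_add_eq_zero g).choose⟩

noncomputable instance : AddCommGroup (RayClassGroup m) where
  zsmul := zsmulRec
  neg_add_cancel g := (exists_add_eq_zero g).choose_spec
  add_comm := add_comm

theorem sum_map_rayClass (s : Multiset (PrimeTo m)) :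
    (s.map fun v ↦ rayClass {v}).sum = rayClass s := by
  induction s using Multiset.induction_on with
  | empty => rfl
  | cons v s ih => rw [Multiset.map_cons, Multiset.sum_cons, ih, ← rayClass_add,
      Multiset.singleton_add]

theorem rayClass_surjective : Function.Surjective (rayClass : Multiset (PrimeTo m) → _) :=
  Quotient.mk''_surjective

end RayClass

section RayClassFinite

open nonZeroDivisors

variable {R : Type*} [CommRing R] [IsDedekindDomain R] {m : R}

theorem isPrincipal_idealOf_mul_of_mk0_eq {s s' t : Multiset (PrimeTo m)}
    (hs : ClassGroup.mk0 ⟨idealOf s, mem_nonZeroDivisors_of_ne_zero (idealOf_ne_bot s)⟩ =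
      ClassGroup.mk0 ⟨idealOf s', mem_nonZeroDivisors_of_ne_zero (idealOf_ne_bot s')⟩)
    (h : (idealOf s' * idealOf t).IsPrincipal) : (idealOf s * idealOf t).IsPrincipal := by
  have ht := mem_nonZeroDivisors_of_ne_zero (idealOf_ne_bot t)
  have hst (u : Multiset (PrimeTo m)) : idealOf u * idealOf t ∈ (Ideal R)⁰ :=
    mem_nonZeroDivisors_of_ne_zero (mul_ne_zero (idealOf_ne_bot u) (idealOf_ne_bot t))
  have key (u : Multiset (PrimeTo m)) : ClassGroup.mk0 ⟨idealOf u * idealOf t, hst u⟩ =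
      ClassGroup.mk0 ⟨idealOf u, mem_nonZeroDivisors_of_ne_zero (idealOf_ne_bot u)⟩ *
        ClassGroup.mk0 ⟨idealOf t, ht⟩ := by
    rw [← map_mul]
    rfl
  rw [← ClassGroup.mk0_eq_one_iff (hst s'), key] at h
  rw [← ClassGroup.mk0_eq_one_iff (hst s), key, hs, h]

theorem rayCon_of_mul_eq_span {s s' t : Multiset (PrimeTo m)} {γ γ' : R}
    (h : idealOf s * idealOf t = Ideal.span {γ}) (h' : idealOf s' * idealOf t = Ideal.span {γ'})
    (hγ : m ∣ γ - γ') : rayCon m s s' := by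
  have hne : γ' ≠ 0 := by
    rintro rfl
    rw [Ideal.span_singleton_eq_bot.2 rfl] at h'
    exact mul_ne_zero (idealOf_ne_bot s') (idealOf_ne_bot t) h'
  have hne1 : γ ≠ 0 := by
    rintro rfl
    rw [Ideal.span_singleton_eq_bot.2 rfl] at h
    exact mul_ne_zero (idealOf_ne_bot s) (idealOf_ne_bot t) h
  obtain ⟨ε, hε, hε0, hε1⟩ := exists_mem_dvd_sub_one (m := m) (I := Ideal.span {γ})
    (by rwa [Ne, Ideal.span_singleton_eq_bot])
    (by rw [← h, ← idealOf_add]; exact isCoprime_idealOf _)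
  obtain ⟨δ, rfl⟩ := Ideal.mem_span_singleton.1 hε
  have hδ : δ ≠ 0 := right_ne_zero_of_mul hε0
  refine rayCon_iff.2 ⟨γ' * δ, γ * δ, mul_ne_zero hne hδ, hε0, ?_, hε1, ?_⟩
  · obtain ⟨k, hk⟩ := hγ
    obtain ⟨l, hl⟩ := hε1
    exact ⟨l - k * δ, by linear_combination hl - δ * hk⟩
  · rw [← Ideal.span_singleton_mul_span_singleton, ← Ideal.span_singleton_mul_span_singleton]
    refine mul_right_cancel₀ (idealOf_ne_bot t) ?_
    rw [mul_assoc, h, mul_assoc _ _ (idealOf t), h', mul_right_comm, mul_comm (Ideal.span {γ'}),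
      mul_right_comm]

theorem finite_rayClassGroup [Finite (ClassGroup R)] [Finite (R ⧸ Ideal.span {m})] :
    Finite (RayClassGroup m) := by
  let cls (s : Multiset (PrimeTo m)) : ClassGroup R :=
    ClassGroup.mk0 ⟨idealOf s, mem_nonZeroDivisors_of_ne_zero (idealOf_ne_bot s)⟩
  have hT (C : ClassGroup R) : ∃ t : Multiset (PrimeTo m), ∀ s, cls s = C →
      (idealOf s * idealOf t).IsPrincipal := by
    by_cases hC : ∃ s, cls s = C
    · obtain ⟨s', rfl⟩ := hC
      obtain ⟨t, γ, -, -, h⟩ := exists_idealOf_mul_eq_span s'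
      exact ⟨t, fun s hs ↦ isPrincipal_idealOf_mul_of_mk0_eq hs ⟨γ, h⟩⟩
    · exact ⟨0, fun s hs ↦ absurd ⟨s, hs⟩ hC⟩
  choose T hT using hT
  have hγ (s : Multiset (PrimeTo m)) : ∃ γ, idealOf s * idealOf (T (cls s)) = Ideal.span {γ} :=
    (hT _ s rfl).principal
  choose γ hγ using hγ
  refine Finite.of_injective (β := ClassGroup R × (R ⧸ Ideal.span {m}))
    (fun g ↦ (cls (Function.surjInv rayClass_surjective g),
      Ideal.Quotient.mk _ (γ (Function.surjInv rayClass_surjective g)))) fun g g' h ↦ ?_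
  obtain ⟨h1, h2⟩ := Prod.ext_iff.1 h
  dsimp only at h1 h2
  rw [← Function.surjInv_eq rayClass_surjective g, ← Function.surjInv_eq rayClass_surjective g',
    rayClass_eq]
  refine rayCon_of_mul_eq_span (hγ _) (by rw [h1]; exact hγ _) ?_
  rwa [← Ideal.mem_span_singleton, ← Ideal.Quotient.eq]

theorem exists_equiv_rayClass (hm : ¬ IsUnit m) (hunit : ∀ u : R, IsUnit u → m ∣ u - 1 → u = 1)
    {g : RayClassGroup m} {t : Multiset (PrimeTo m)} (ht : g + rayClass t = 0) :
    ∃ e : {γ : R // γ ∈ idealOf t ∧ m ∣ γ - 1} ≃ {s : Multiset (PrimeTo m) // rayClass s = g},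
      ∀ γ, idealOf (e γ).1 * idealOf t = Ideal.span {γ.1} := by
  have hne {γ : R} (h : m ∣ γ - 1) : γ ≠ 0 := by
    rintro rfl
    rw [zero_sub, dvd_neg] at h
    exact hm (isUnit_of_dvd_one h)
  have hex (γ : {γ : R // γ ∈ idealOf t ∧ m ∣ γ - 1}) :
      ∃ s : {s : Multiset (PrimeTo m) // rayClass s = g},
        idealOf s.1 * idealOf t = Ideal.span {γ.1} := by
    obtain ⟨γ, hγ, hγ1⟩ := γ
    obtain ⟨J, hJ⟩ := Ideal.dvd_span_singleton.2 hγ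
    have hJ0 : J ≠ ⊥ := by
      rintro rfl
      rw [Ideal.mul_bot, Ideal.span_singleton_eq_bot] at hJ
      exact hne hγ1 hJ
    have hJm : IsCoprime J (Ideal.span {m}) := by
      have := isCoprime_span_of_dvd_sub_one hγ1
      rw [hJ] at this
      exact this.of_mul_left_right
    obtain ⟨s, rfl⟩ := exists_idealOf_eq hJ0 hJm
    refine ⟨⟨s, ?_⟩, by rw [hJ, mul_comm]⟩
    have := rayClass_eq_zero_of_span (s := t + s) (hne hγ1) hγ1 (by rw [idealOf_add, hJ])
    rw [rayClass_add, add_comm, ← ht] at this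
    exact add_right_cancel this
  choose f hf using hex
  refine ⟨Equiv.ofBijective f ⟨fun γ γ' h ↦ ?_, fun ⟨s, hs⟩ ↦ ?_⟩, hf⟩
  · have h1 : Ideal.span {γ.1} = Ideal.span {γ'.1} := by rw [← hf, ← hf, h]
    obtain ⟨u, hu⟩ := Ideal.span_singleton_eq_span_singleton.1 h1
    have h2 : (u : R) = 1 := by
      refine hunit u u.isUnit ?_
      obtain ⟨k, hk⟩ := γ.2.2
      obtain ⟨l, hl⟩ := γ'.2.2
      exact ⟨l - k * u, by linear_combination hl - u * hk + hu⟩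
    exact Subtype.ext (by rw [← hu, h2, mul_one])
  · have h0 : rayClass (s + t) = rayClass 0 := by
      rw [rayClass_add, hs, ht]
      rfl
    rw [rayClass_eq, rayCon_iff, idealOf_add, idealOf_zero] at h0
    obtain ⟨α, β, hα, hβ, hα1, hβ1, h⟩ := h0
    rw [mul_one] at h
    have hβα : β ∈ Ideal.span {α} :=
      Ideal.mul_le_left (h.ge (Ideal.mem_span_singleton_self β))
    obtain ⟨γ, rfl⟩ := Ideal.mem_span_singleton.1 hβα
    rw [← Ideal.span_singleton_mul_span_singleton] at h
    have h' : idealOf s * idealOf t = Ideal.span {γ} :=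
      mul_left_cancel₀ (by rwa [Ne, Ideal.zero_eq_bot, Ideal.span_singleton_eq_bot]) h
    refine ⟨⟨γ, ?_, ?_⟩, ?_⟩
    · exact Ideal.mul_le_right (h'.ge (Ideal.mem_span_singleton_self γ))
    · obtain ⟨k, hk⟩ := hα1
      obtain ⟨l, hl⟩ := hβ1
      exact ⟨l - k * γ, by linear_combination hl - γ * hk⟩
    · refine Subtype.ext (idealOf_injective (mul_right_cancel₀ (idealOf_ne_bot t) ?_))
      exact (hf _).trans h'.symm

end RayClassFinite

section QuadraticGenerator

open Ideal

variable {R : Type*} [CommRing R]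

/-- The additive group `n (ℤ + ℤ ω)`. -/
def quadLattice (ω : R) (n : ℕ) : AddSubgroup R where
  carrier := {x | ∃ X Y : ℤ, x = n * (X + Y * ω)}
  add_mem' := by
    rintro _ _ ⟨X, Y, rfl⟩ ⟨X', Y', rfl⟩
    exact ⟨X + X', Y + Y', by push_cast; ring⟩
  zero_mem' := ⟨0, 0, by simp⟩
  neg_mem' := by
    rintro _ ⟨X, Y, rfl⟩
    exact ⟨-X, -Y, by push_cast; ring⟩

theorem mem_quadLattice {ω : R} {n : ℕ} {x : R} :
    x ∈ quadLattice ω n ↔ ∃ X Y : ℤ, x = n * (X + Y * ω) := Iff.rfl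

variable [IsDedekindDomain R] [Module.Free ℤ R]

/-- `ω` generates a quadratic order of discriminant `-m`, with norm form
`X² + bXY + eY²`, whose index in `R` divides a power of `m`. -/
structure IsQuadraticGenerator (ω : R) (b e : ℤ) (m : ℕ) : Prop where
  three_le : 3 ≤ m
  disc : (m : ℤ) = 4 * e - b ^ 2
  exists_mul_eq : ∀ α : R, ∃ X Y : ℤ, (m : R) * α = X + Y * ω
  absNorm_eq : ∀ X Y : ℤ, (absNorm (span {(X + Y * ω : R)}) : ℤ) = X ^ 2 + b * X * Y + e * Y ^ 2

namespace IsQuadraticGenerator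

variable {ω : R} {b e : ℤ} {m : ℕ}

theorem eq_zero (h : IsQuadraticGenerator ω b e m) {X Y : ℤ} (hXY : (X + Y * ω : R) = 0) :
    X = 0 ∧ Y = 0 := by
  have h1 := h.absNorm_eq X Y
  rw [hXY, span_singleton_eq_bot.2 rfl, absNorm_bot] at h1
  have h3 : (3 : ℤ) ≤ m := by exact_mod_cast h.three_le
  have h2 : (2 * X + b * Y) ^ 2 + m * Y ^ 2 = 0 := by
    rw [h.disc]
    push_cast at h1
    linear_combination -4 * h1
  have hY : Y = 0 := by
    by_contra hY
    have : 0 < Y ^ 2 := by positivity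
    nlinarith [sq_nonneg (2 * X + b * Y)]
  subst hY
  refine ⟨?_, rfl⟩
  nlinarith

theorem eq_and_eq (h : IsQuadraticGenerator ω b e m) {X Y X' Y' : ℤ}
    (hXY : (X + Y * ω : R) = X' + Y' * ω) : X = X' ∧ Y = Y' := by
  have := h.eq_zero (X := X - X') (Y := Y - Y') (by push_cast; linear_combination hXY)
  omega

theorem absNorm_natCast (h : IsQuadraticGenerator ω b e m) (n : ℕ) :
    absNorm (span {(n : R)}) = n ^ 2 := by
  have := h.absNorm_eq n 0
  simp only [Int.cast_natCast, Int.cast_zero, zero_mul, add_zero, mul_zero] at this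
  zify
  rw [this]
  ring

theorem sq_mul_absNorm (h : IsQuadraticGenerator ω b e m) {α : R} {X Y : ℤ}
    (hα : (m : R) * α = X + Y * ω) :
    (m : ℤ) ^ 2 * absNorm (span {α}) = X ^ 2 + b * X * Y + e * Y ^ 2 := by
  rw [← h.absNorm_eq, ← hα, ← span_singleton_mul_span_singleton, map_mul, h.absNorm_natCast]
  push_cast
  ring

theorem not_isUnit (h : IsQuadraticGenerator ω b e m) : ¬ IsUnit (m : R) := by
  intro hm
  have h1 := h.absNorm_natCast m
  rw [span_singleton_eq_top.2 hm, absNorm_top] at h1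
  have := h.three_le
  nlinarith

theorem eq_one_of_isUnit [Module.Finite ℤ R] (h : IsQuadraticGenerator ω b e m) {u : R}
    (hu : IsUnit u)
    (h1 : (m : R) ∣ u - 1) : u = 1 := by
  obtain ⟨α, hα⟩ := h1
  obtain ⟨X, Y, hXY⟩ := h.exists_mul_eq α
  have hN := h.sq_mul_absNorm hXY
  have hu1 := h.absNorm_eq (X + 1) Y
  have hu2 : (((X + 1 : ℤ) : R) + Y * ω) = u := by
    push_cast
    linear_combination -hα - hXY
  rw [hu2, span_singleton_eq_top.2 hu, absNorm_top] at hu1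
  push_cast at hu1
  have h3 : (3 : ℤ) ≤ m := by exact_mod_cast h.three_le
  have hT : (2 * (X + 1) + b * Y) ^ 2 + m * Y ^ 2 = 4 := by
    rw [h.disc]
    linear_combination -4 * hu1
  have hT2 : -2 ≤ 2 * (X + 1) + b * Y := by 
    nlinarith [mul_nonneg (by lia : (0 : ℤ) ≤ m) (sq_nonneg Y)]
  have hα0 : absNorm (span {α}) = 0 := by
    by_contra hne
    have : (1 : ℤ) ≤ absNorm (span {α}) := by exact_mod_cast Nat.one_le_iff_ne_zero.2 hne
    nlinarith
  rw [absNorm_eq_zero_iff, span_singleton_eq_bot] at hα0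
  rw [hα0, mul_zero] at hα
  exact sub_eq_zero.1 hα

theorem absNorm_eq_index (I : Ideal R) : absNorm I = I.toAddSubgroup.index := rfl

theorem index_quadLattice (h : IsQuadraticGenerator ω b e m) {n : ℕ} (hn : n ≠ 0) :
    (quadLattice ω n).index = (quadLattice ω 1).index * n ^ 2 := by
  have hle : quadLattice ω n ≤ (span {(n : R)}).toAddSubgroup := by
    rintro _ ⟨X, Y, rfl⟩
    exact mem_span_singleton.2 (dvd_mul_right _ _)
  have hn0 : (n : R) ≠ 0 := by
    intro h0
    have := h.absNorm_natCast n
    rw [h0, span_singleton_eq_bot.2 rfl, absNorm_bot] at this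
    exact hn (by simpa using this.symm)
  have hmap : quadLattice ω n = (quadLattice ω 1).map (AddMonoidHom.mulLeft (n : R)) := by
    ext x
    simp only [AddSubgroup.mem_map, mem_quadLattice, AddMonoidHom.coe_mulLeft]
    constructor
    · rintro ⟨X, Y, rfl⟩
      exact ⟨_, ⟨X, Y, rfl⟩, by simp⟩
    · rintro ⟨_, ⟨X, Y, rfl⟩, rfl⟩
      exact ⟨X, Y, by simp⟩
  have htop : (span {(n : R)}).toAddSubgroup =
      (⊤ : AddSubgroup R).map (AddMonoidHom.mulLeft (n : R)) := by
    ext x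
    simp only [Submodule.mem_toAddSubgroup, mem_span_singleton, AddSubgroup.mem_map,
      AddSubgroup.mem_top, true_and, AddMonoidHom.coe_mulLeft, dvd_def, eq_comm]
  rw [← AddSubgroup.relIndex_mul_index hle, ← absNorm_eq_index, h.absNorm_natCast, hmap, htop,
    AddSubgroup.relIndex_map_map_of_injective _ _ (mul_right_injective₀ hn0),
    AddSubgroup.relIndex_top_right]

theorem index_quadLattice_one_ne_zero (h : IsQuadraticGenerator ω b e m) :
    (quadLattice ω 1).index ≠ 0 := by
  have hle : (span {(m : R)}).toAddSubgroup ≤ quadLattice ω 1 := by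
    intro x hx
    obtain ⟨α, rfl⟩ := mem_span_singleton.1 hx
    obtain ⟨X, Y, hXY⟩ := h.exists_mul_eq α
    exact ⟨X, Y, by simpa using hXY⟩
  have := AddSubgroup.index_dvd_of_le hle
  rw [← absNorm_eq_index, h.absNorm_natCast] at this
  have h3 := h.three_le
  exact ne_zero_of_dvd_ne_zero (by positivity) this

end IsQuadraticGenerator

end QuadraticGenerator

section RaySum

open Ideal Real

variable {R : Type*} [CommRing R] [IsDedekindDomain R] [Module.Free ℤ R] [Module.Finite ℤ R]

namespace IsQuadraticGenerator

variable {ω : R} {b e : ℤ} {m : ℕ}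

theorem exists_equiv_prod (h : IsQuadraticGenerator ω b e m) {I : Ideal R} (hI : I ≠ ⊥)
    (hIm : IsCoprime I (span {(m : R)})) {γ₀ : R} (hγ₀ : γ₀ ∈ I) (hγ₀m : (m : R) ∣ γ₀ - 1) :
    ∃ (k : ℕ) (r : Fin k → R) (φ : Fin k × (ℤ × ℤ) ≃ {γ : R // γ ∈ I ∧ (m : R) ∣ γ - 1}),
      k = (quadLattice ω 1).index * absNorm I ∧
      ∀ i x y, (φ (i, (x, y))).1 = r i + (m * absNorm I : ℕ) * (x + y * ω) := by
  set n := m * absNorm I with hn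
  have hm0 : m ≠ 0 := by have := h.three_le; omega
  have hI0 : absNorm I ≠ 0 := by rwa [Ne, absNorm_eq_zero_iff]
  have hn0 : n ≠ 0 := mul_ne_zero hm0 hI0
  set M : AddSubgroup R := (I ⊓ span {(m : R)}).toAddSubgroup with hM
  have hMmem {x : R} : x ∈ M ↔ x ∈ I ∧ (m : R) ∣ x := by
    rw [hM, Submodule.mem_toAddSubgroup, Submodule.mem_inf, mem_span_singleton]
  have hle : quadLattice ω n ≤ M := by
    rintro _ ⟨X, Y, rfl⟩
    refine hMmem.2 ⟨I.mul_mem_right _ ?_, ⟨absNorm I * (X + Y * ω), by rw [hn]; push_cast; ring⟩⟩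
    rw [hn, Nat.cast_mul]
    exact I.mul_mem_left _ (absNorm_mem I)
  set H : AddSubgroup M := (quadLattice ω n).addSubgroupOf M
  have hidx : Nat.card (M ⧸ H) = (quadLattice ω 1).index * absNorm I := by
    have h1 : H.index * M.index = (quadLattice ω n).index := AddSubgroup.relIndex_mul_index hle
    have h2 : M.index = absNorm I * m ^ 2 := by
      rw [hM, ← absNorm_eq_index, ← mul_eq_inf_of_isCoprime hIm, map_mul, h.absNorm_natCast]
    rw [h2, h.index_quadLattice hn0] at h1
    refine Nat.eq_of_mul_eq_mul_right (Nat.pos_of_ne_zero (mul_ne_zero hI0 (pow_ne_zero 2 hm0))) ?_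
    rw [show Nat.card (M ⧸ H) = H.index from rfl, h1, hn]
    ring
  have : Finite (M ⧸ H) := Nat.finite_of_card_ne_zero
    (hidx ▸ mul_ne_zero h.index_quadLattice_one_ne_zero hI0)
  let ψ : Fin (Nat.card (M ⧸ H)) ≃ M ⧸ H := (Finite.equivFin _).symm
  let r (i : Fin (Nat.card (M ⧸ H))) : R := γ₀ + ((ψ i).out : M)
  have hlat (x y : ℤ) : (n : R) * (x + y * ω) ∈ M := hle ⟨x, y, rfl⟩
  let f (p : Fin (Nat.card (M ⧸ H)) × (ℤ × ℤ)) : {γ : R // γ ∈ I ∧ (m : R) ∣ γ - 1} :=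
    ⟨r p.1 + n * (p.2.1 + p.2.2 * ω), by
      have h1 := hMmem.1 (add_mem (ψ p.1).out.2 (hlat p.2.1 p.2.2))
      refine ⟨?_, ?_⟩
      · rw [add_assoc]
        exact I.add_mem hγ₀ h1.1
      · convert dvd_add hγ₀m h1.2 using 1
        ring⟩
  have hf : Function.Bijective f := by
    constructor
    · rintro ⟨i, x, y⟩ ⟨j, x', y'⟩ hij
      have h1 : r i + n * (x + y * ω) = r j + n * (x' + y' * ω) := congrArg Subtype.val hij
      have h2 : ψ i = ψ j := by
        rw [← QuotientAddGroup.out_eq' (ψ i), ← QuotientAddGroup.out_eq' (ψ j),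
          QuotientAddGroup.eq]
        refine AddSubgroup.mem_addSubgroupOf.2 ⟨x - x', y - y', ?_⟩
        push_cast
        linear_combination -h1
      obtain rfl := ψ.injective h2
      have h3 : (x + y * ω : R) = x' + y' * ω := by
        refine mul_left_cancel₀ ?_ (add_left_cancel h1)
        intro h0
        have := h.absNorm_natCast n
        rw [h0, span_singleton_eq_bot.2 rfl, absNorm_bot] at this
        exact hn0 (by simpa using this.symm)
      obtain ⟨rfl, rfl⟩ := h.eq_and_eq h3
      rfl
    · rintro ⟨γ, hγ, hγm⟩
      have hκ : γ - γ₀ ∈ M := hMmem.2 ⟨I.sub_mem hγ hγ₀, by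
        convert dvd_sub hγm hγ₀m using 1; ring⟩
      have h1 : ((QuotientAddGroup.mk ⟨γ - γ₀, hκ⟩ : M ⧸ H).out : M ⧸ H) =
        QuotientAddGroup.mk ⟨γ - γ₀, hκ⟩ := QuotientAddGroup.out_eq' _
      obtain ⟨x, y, hxy⟩ := AddSubgroup.mem_addSubgroupOf.1 (QuotientAddGroup.eq.1 h1)
      refine ⟨(ψ.symm (QuotientAddGroup.mk ⟨γ - γ₀, hκ⟩), x, y), Subtype.ext ?_⟩
      simp only [f, r, Equiv.apply_symm_apply]
      push_cast at hxy
      linear_combination -hxy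
  exact ⟨_, r, Equiv.ofBijective f hf, hidx, fun i x y ↦ rfl⟩

theorem exists_abs_tsum_exp_sub_le (h : IsQuadraticGenerator ω b e m) {I : Ideal R} (hI : I ≠ ⊥)
    (hIm : IsCoprime I (span {(m : R)})) :
    ∃ C : ℝ, ∀ t : ℝ, 0 < t →
      (Summable fun γ : {γ : R // γ ∈ I ∧ (m : R) ∣ γ - 1} ↦
        rexp (-(absNorm (span {γ.1}) / absNorm I) * t)) ∧
      (t ≤ 1 → |(∑' γ : {γ : R // γ ∈ I ∧ (m : R) ∣ γ - 1},
        rexp (-(absNorm (span {γ.1}) / absNorm I) * t)) -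
          π * (quadLattice ω 1).index / (√(m / 4) * m ^ 2) / t| ≤ C) := by
  have hm0 : (0 : ℝ) < m := by have := h.three_le; positivity
  have hI0 : (0 : ℝ) < absNorm I := by
    have : absNorm I ≠ 0 := by rwa [Ne, absNorm_eq_zero_iff]
    positivity
  obtain ⟨γ₀, hγ₀, -, hγ₀m⟩ := exists_mem_dvd_sub_one hI hIm
  obtain ⟨k, r, φ, hk, hφ⟩ := h.exists_equiv_prod hI hIm hγ₀ hγ₀m
  obtain ⟨C, hC0, hC⟩ := exists_abs_tsum_exp_quadratic_sub_le (b / 2) (m / 4) (by positivity)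
  choose X Y hXY using fun i ↦ h.exists_mul_eq (r i)
  set n : ℝ := m * absNorm I with hn
  have hn0 : 0 < n := by positivity
  have hnorm (i : Fin k) (p : ℤ × ℤ) : (absNorm (span {(φ (i, p)).1}) : ℝ) =
      n ^ 2 * ((p.1 + X i / (m * n) + b / 2 * (p.2 + Y i / (m * n))) ^ 2 +
        m / 4 * (p.2 + Y i / (m * n)) ^ 2) := by
    have h1 : (m : R) * (φ (i, p)).1 = ((X i + m * (m * absNorm I) * p.1 : ℤ) : R) +
        ((Y i + m * (m * absNorm I) * p.2 : ℤ) : R) * ω := by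
      rw [hφ]
      push_cast
      linear_combination hXY i
    have h2 := h.sq_mul_absNorm h1
    have h3 : (m : ℝ) ^ 2 * (absNorm (span {(φ (i, p)).1}) : ℝ) =
        (X i + m * n * p.1) ^ 2 + b * (X i + m * n * p.1) * (Y i + m * n * p.2) +
          e * (Y i + m * n * p.2) ^ 2 := by
      rw [hn]
      exact_mod_cast h2
    have h4 : (m : ℝ) = 4 * e - b ^ 2 := by exact_mod_cast h.disc
    have h5 : (e : ℝ) = (m + b ^ 2) / 4 := by linarith
    refine mul_left_cancel₀ (pow_ne_zero 2 hm0.ne') ?_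
    rw [h3, h5]
    field_simp
    ring
  have hterm (i : Fin k) (p : ℤ × ℤ) (t : ℝ) :
      rexp (-(absNorm (span {(φ (i, p)).1}) / absNorm I) * t) =
      rexp (-π * ((p.1 + X i / (m * n) + b / 2 * (p.2 + Y i / (m * n))) ^ 2 +
        m / 4 * (p.2 + Y i / (m * n)) ^ 2) * (n ^ 2 * t / (π * absNorm I))) := by
    rw [hnorm]
    congr 1
    field_simp
  refine ⟨k * (C * (1 + n ^ 2 / (π * absNorm I))), fun t ht ↦ ?_⟩
  have ht' : 0 < n ^ 2 * t / (π * absNorm I) := by positivity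
  have hs (i : Fin k) : Summable fun p : ℤ × ℤ ↦
      rexp (-(absNorm (span {(φ (i, p)).1}) / absNorm I) * t) := by
    simp only [hterm]
    exact (hC _ _ _ ht').1
  have hsum : Summable fun x : Fin k × (ℤ × ℤ) ↦
      rexp (-(absNorm (span {(φ x).1}) / absNorm I) * t) := by
    rw [summable_prod_of_nonneg (fun _ ↦ (exp_pos _).le)]
    exact ⟨hs, Summable.of_finite⟩
  refine ⟨φ.summable_iff.1 hsum, fun ht1 ↦ ?_⟩
  rw [← φ.tsum_eq, hsum.tsum_prod' hs, tsum_fintype]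
  have hkR : (k : ℝ) = (quadLattice ω 1).index * absNorm I := by exact_mod_cast hk
  have hmain : π * (quadLattice ω 1).index / (√(m / 4) * m ^ 2) / t =
      ∑ i : Fin k, 1 / (√(m / 4) * (n ^ 2 * t / (π * absNorm I))) := by
    rw [Finset.sum_const, Finset.card_univ, Fintype.card_fin, nsmul_eq_mul, hkR, hn]
    field_simp
  rw [hmain, ← Finset.sum_sub_distrib]
  refine (Finset.abs_sum_le_sum_abs _ _).trans ?_
  refine (Finset.sum_le_card_nsmul _ _ (C * (1 + n ^ 2 / (π * absNorm I))) fun i _ ↦ ?_).trans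
    (by simp)
  simp only [hterm]
  refine (hC _ _ _ ht').2.trans ?_
  gcongr
  nlinarith [sq_nonneg n]

end IsQuadraticGenerator

end RaySum

section PrimesInRayClass

open Ideal Real

variable {R : Type*} [CommRing R] [IsDedekindDomain R] [Module.Free ℤ R]

theorem multisetNorm_absNorm {m : R} (s : Multiset (PrimeTo m)) :
    multisetNorm (fun v : PrimeTo m ↦ absNorm v.1.asIdeal) s = absNorm (idealOf s) := by
  rw [multisetNorm, idealOf, map_multiset_prod, Multiset.map_map]
  rfl

variable [Module.Finite ℤ R]

theorem two_le_absNorm {m : R} (v : PrimeTo m) : 2 ≤ absNorm v.1.asIdeal := by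
  have h0 : absNorm v.1.asIdeal ≠ 0 := by
    rw [Ne, absNorm_eq_zero_iff]
    exact v.1.ne_bot
  have h1 : absNorm v.1.asIdeal ≠ 1 := by
    rw [Ne, absNorm_eq_one_iff]
    exact v.1.isPrime.ne_top
  omega

theorem countable_ideal [CharZero R] : Countable (Ideal R) := by
  have : (⋃ n : ℕ, {I : Ideal R | absNorm I = n}).Countable :=
    Set.countable_iUnion fun n ↦ by
      rcases Nat.eq_zero_or_pos n with rfl | hn
      · simp [absNorm_eq_zero_iff]
      · exact (finite_setOfPred_absNorm_eq n).countable
  refine Set.countable_univ_iff.1 (this.mono fun I _ ↦ ?_)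
  simp

theorem countable_primeTo [CharZero R] (m : R) : Countable (PrimeTo m) := by
  have := countable_ideal (R := R)
  refine Function.Injective.countable (f := fun v : PrimeTo m ↦ v.1.asIdeal) fun v w h ↦ ?_
  exact Subtype.ext (IsDedekindDomain.HeightOneSpectrum.ext h)

namespace IsQuadraticGenerator

variable {ω : R} {b e : ℤ} {m : ℕ}

theorem exists_abs_tsum_rayClass_sub_le (h : IsQuadraticGenerator ω b e m)
    (g : RayClassGroup (m : R)) :
    ∃ C : ℝ, ∀ t : ℝ, 0 < t →
      (Summable fun s : {s : Multiset (PrimeTo (m : R)) // rayClass s = g} ↦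
        rexp (-(absNorm (idealOf s.1)) * t)) ∧
      (t ≤ 1 → |(∑' s : {s : Multiset (PrimeTo (m : R)) // rayClass s = g},
        rexp (-(absNorm (idealOf s.1)) * t)) -
          π * (quadLattice ω 1).index / (√(m / 4) * m ^ 2) / t| ≤ C) := by
  obtain ⟨t, ht⟩ := rayClass_surjective (-g)
  obtain ⟨φ, hφ⟩ := exists_equiv_rayClass h.not_isUnit (fun u ↦ h.eq_one_of_isUnit)
    (g := g) (t := t) (by rw [ht, add_neg_cancel])
  obtain ⟨C, hC⟩ := h.exists_abs_tsum_exp_sub_le (idealOf_ne_bot t) (isCoprime_idealOf t)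
  have hnorm (γ) : (absNorm (span {γ.1}) : ℝ) / absNorm (idealOf t) =
      absNorm (idealOf (φ γ).1) := by
    have h0 : absNorm (idealOf t) ≠ 0 := by
      rw [Ne, absNorm_eq_zero_iff]
      exact idealOf_ne_bot t
    rw [← hφ γ, map_mul, Nat.cast_mul, mul_div_cancel_right₀ _ (by exact_mod_cast h0)]
  refine ⟨C, fun t ht ↦ ⟨φ.summable_iff.1 ?_, fun ht1 ↦ ?_⟩⟩
  · simpa only [hnorm, Function.comp_def] using (hC t ht).1
  · rw [← φ.tsum_eq]
    simpa only [hnorm] using (hC t ht).2 ht1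

theorem not_summable_log_div [CharZero R] [Finite (ClassGroup R)]
    (h : IsQuadraticGenerator ω b e m) (g : RayClassGroup (m : R)) :
    ¬ Summable fun v : {v : PrimeTo (m : R) // rayClass {v} = g} ↦
      Real.log (absNorm v.1.1.asIdeal) / absNorm v.1.1.asIdeal := by
  have hm0 : m ≠ 0 := by have := h.three_le; omega
  have : Finite (R ⧸ span {(m : R)}) := Nat.finite_of_card_ne_zero <| by
    change absNorm (span {(m : R)}) ≠ 0
    rw [h.absNorm_natCast]
    positivity
  have := finite_rayClassGroup (m := (m : R))
  have := countable_primeTo (m : R)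
  choose C hC using h.exists_abs_tsum_rayClass_sub_le
  obtain ⟨B, hB⟩ := (Set.finite_range C).bddAbove
  have hκ : 0 < π * (quadLattice ω 1).index / (√(m / 4 : ℝ) * m ^ 2) := by
    have := Nat.pos_of_ne_zero h.index_quadLattice_one_ne_zero
    have := Nat.pos_of_ne_zero hm0
    positivity
  refine not_summable_log_div_of_tsum_exp (N := fun v : PrimeTo (m : R) ↦ absNorm v.1.asIdeal)
    two_le_absNorm (c := fun v ↦ rayClass {v}) (fun t ht ↦ ?_) hκ (C := B) (fun g t ht ht1 ↦ ?_) g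
  · simp only [multisetNorm_absNorm]
    rw [← (Equiv.sigmaFiberEquiv rayClass).summable_iff, Function.comp_def,
      summable_sigma_of_nonneg fun _ ↦ (exp_pos _).le]
    exact ⟨fun g ↦ (hC g t ht).1, Summable.of_finite⟩
  · simp only [multisetNorm_absNorm]
    rw [← (Equiv.subtypeEquivRight fun s ↦ by rw [sum_map_rayClass] :
      {s : Multiset (PrimeTo (m : R)) // rayClass s = g} ≃ _).tsum_eq]
    exact ((hC g t ht).2 ht1).trans (hB ⟨g, rfl⟩)

theorem exists_asIdeal_eq_span (h : IsQuadraticGenerator ω b e m) {v : PrimeTo (m : R)}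
    (hv : ¬ (absNorm v.1.asIdeal).Prime) : ∃ p : ℕ, v.1.asIdeal = span {(p : R)} := by
  have := v.1.isPrime
  have hex : ∃ p : ℕ, p.Prime ∧ (p : R) ∈ v.1.asIdeal := by
    by_contra! hcon
    have key (n : ℕ) : n ≠ 0 → (n : R) ∉ v.1.asIdeal := by
      induction n using Nat.recOnMul with
      | zero => simp
      | one => simpa using (Ideal.ne_top_iff_one _).1 v.1.isPrime.ne_top
      | prime p hp => exact fun _ ↦ hcon p hp
      | mul a b iha ihb =>
        intro hab hmem
        rw [Nat.cast_mul] at hmem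
        rcases v.1.isPrime.mem_or_mem hmem with h1 | h1
        · exact iha (left_ne_zero_of_mul hab) h1
        · exact ihb (right_ne_zero_of_mul hab) h1
    exact key _ (by have := two_le_absNorm v; omega) (absNorm_mem v.1.asIdeal)
  obtain ⟨p, hp, hpv⟩ := hex
  obtain ⟨J, hJ⟩ := dvd_span_singleton.2 hpv
  refine ⟨p, ?_⟩
  have hN := congrArg absNorm hJ
  rw [h.absNorm_natCast, map_mul] at hN
  obtain ⟨i, hi, hvi⟩ := (Nat.dvd_prime_pow hp).1 ⟨_, hN⟩
  have hi2 : i = 2 := by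
    interval_cases i
    · have := two_le_absNorm v
      simp [hvi] at this
    · rw [pow_one] at hvi
      exact absurd (hvi ▸ hp) hv
    · rfl
  rw [hvi, hi2, eq_comm, Nat.mul_eq_left (pow_ne_zero 2 hp.ne_zero), absNorm_eq_one_iff] at hN
  rw [hJ, hN, mul_top]

theorem summable_log_sq_div_sq : Summable fun n : ℕ ↦ Real.log ((n ^ 2 : ℕ) : ℝ) / (n ^ 2 : ℕ) := by
  have h1 : Summable fun n : ℕ ↦ 4 * (1 / (n : ℝ) ^ (3 / 2 : ℝ)) :=
    (Real.summable_one_div_nat_rpow.2 (by norm_num)).mul_left 4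
  refine h1.of_nonneg_of_le (fun n ↦ ?_) fun n ↦ ?_
  · exact div_nonneg (Real.log_natCast_nonneg _) (Nat.cast_nonneg _)
  · rcases Nat.eq_zero_or_pos n with rfl | hn
    · simp
    · have hn' : (0 : ℝ) < n := by exact_mod_cast hn
      have h2 := Real.log_le_rpow_div hn'.le (by norm_num : (0 : ℝ) < 1 / 2)
      have h3 : (n : ℝ) ^ 2 = n ^ (1 / 2 : ℝ) * n ^ (3 / 2 : ℝ) := by
        rw [← Real.rpow_add hn', ← Real.rpow_natCast]
        norm_num
      push_cast
      rw [Real.log_pow, h3, div_le_iff₀ (by positivity)]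
      push_cast
      have h4 : 4 * (1 / (n : ℝ) ^ (3 / 2 : ℝ)) * (n ^ (1 / 2 : ℝ) * n ^ (3 / 2 : ℝ)) =
          4 * n ^ (1 / 2 : ℝ) := by
        field_simp
      rw [h4]
      linarith

theorem summable_indicator_not_prime (h : IsQuadraticGenerator ω b e m) :
    Summable (Set.indicator {v : PrimeTo (m : R) | ¬ (absNorm v.1.asIdeal).Prime}
      fun v ↦ Real.log (absNorm v.1.asIdeal) / absNorm v.1.asIdeal) := by
  rw [← summable_subtype_iff_indicator]
  choose p hp using fun v : {v : PrimeTo (m : R) | ¬ (absNorm v.1.asIdeal).Prime} ↦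
    h.exists_asIdeal_eq_span v.2
  have hinj : Function.Injective p := fun v w hvw ↦ by
    refine Subtype.ext (Subtype.ext (IsDedekindDomain.HeightOneSpectrum.ext ?_))
    rw [hp, hp, hvw]
  refine (summable_log_sq_div_sq.comp_injective hinj).congr fun v ↦ ?_
  simp only [Function.comp_apply, hp, h.absNorm_natCast]

theorem infinite_setOf_prime_absNorm [CharZero R] [Finite (ClassGroup R)]
    (h : IsQuadraticGenerator ω b e m) (g : RayClassGroup (m : R)) :
    {v : PrimeTo (m : R) | rayClass {v} = g ∧ (absNorm v.1.asIdeal).Prime}.Infinite := by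
  intro hfin
  refine h.not_summable_log_div g ?_
  let F (v : PrimeTo (m : R)) : ℝ := Real.log (absNorm v.1.asIdeal) / absNorm v.1.asIdeal
  have hF (v) : 0 ≤ F v := div_nonneg (Real.log_natCast_nonneg _) (Nat.cast_nonneg _)
  let A : Set (PrimeTo (m : R)) := {v | rayClass {v} = g ∧ (absNorm v.1.asIdeal).Prime}
  let B : Set (PrimeTo (m : R)) := {v | ¬ (absNorm v.1.asIdeal).Prime}
  have hA : Summable (A.indicator F) :=
    summable_of_hasFiniteSupport (hfin.subset Set.support_indicator_subset)
  have hB : Summable (B.indicator F) := h.summable_indicator_not_prime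
  refine ((hA.add hB).comp_injective Subtype.val_injective).of_nonneg_of_le
    (fun v ↦ hF v.1) fun v ↦ ?_
  by_cases hv : (absNorm v.1.1.asIdeal).Prime
  · simp [A, B, hv, v.2, F]
  · simp [A, B, hv, F]

end IsQuadraticGenerator

end PrimesInRayClass

section RepresentedPrimes

open Ideal

variable {R : Type*} [CommRing R]

theorem span_pair_mul_conj {ω : R} {a b c : ℤ} (hω : ω ^ 2 = b * ω - a * c)
    (habc : Int.gcd a (Int.gcd b c) = 1) :
    span {(a : R), ω} * span {(a : R), b - ω} = span {(a : R)} := by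
  apply le_antisymm
  · rw [span_pair_mul_span_pair, span_le]
    rintro x hx
    rw [SetLike.mem_coe, mem_span_singleton]
    simp only [Set.mem_insert_iff, Set.mem_singleton_iff] at hx
    rcases hx with rfl | rfl | rfl | rfl
    · exact dvd_mul_right _ _
    · exact dvd_mul_right _ _
    · exact dvd_mul_left _ _
    · exact ⟨c, by linear_combination -hω⟩
  · rw [span_singleton_le_iff_mem]
    obtain ⟨u, v, w, huvw⟩ : ∃ u v w : ℤ, u * a + v * b + w * c = 1 := by
      obtain ⟨u, v, huv⟩ := Int.isCoprime_iff_gcd_eq_one.2 habc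
      rw [Int.gcd_eq_gcd_ab b c] at huv
      exact ⟨u, v * b.gcdA c, v * b.gcdB c, by linear_combination huv⟩
    have huvw' : (u : R) * a + v * b + w * c = 1 := by simpa using congrArg (Int.cast : ℤ → R) huvw
    have h1 : (a : R) ∈ span {(a : R), ω} := subset_span (by simp)
    have h2 : ω ∈ span {(a : R), ω} := subset_span (by simp)
    have h3 : (a : R) ∈ span {(a : R), b - ω} := subset_span (by simp)
    have h4 : b - ω ∈ span {(a : R), b - ω} := subset_span (by simp)
    have key : (a : R) = u * (a * a) + v * (a * (b - ω)) + v * (ω * a) + w * (ω * (b - ω)) := by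
      linear_combination (-(a : R)) * huvw' + w * hω
    have hmem := add_mem (add_mem (add_mem (mul_mem_left _ (u : R) (mul_mem_mul h1 h3))
      (mul_mem_left _ (v : R) (mul_mem_mul h1 h4))) (mul_mem_left _ (v : R) (mul_mem_mul h2 h3)))
      (mul_mem_left _ (w : R) (mul_mem_mul h2 h4))
    rwa [← key] at hmem

variable [IsDedekindDomain R] [Module.Free ℤ R]

theorem absNorm_span_pair_le {ω : R} {a : ℤ} {m : ℕ} (ha : 0 < a) (ham : IsCoprime a m)
    (hω : ∀ α : R, ∃ X Y : ℤ, (m : R) * α = X + Y * ω) :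
    (absNorm (span {(a : R), ω}) : ℤ) ≤ a := by
  lift a to ℕ using ha.le
  rw [Nat.cast_pos] at ha
  have : NeZero a := ⟨ha.ne'⟩
  have hmem : ((a : ℤ) : R) ∈ span {((a : ℤ) : R), ω} := subset_span (by simp)
  have hker : (Int.castRingHom (R ⧸ span {((a : ℤ) : R), ω})) a = 0 := by
    rw [eq_intCast, ← map_intCast (Ideal.Quotient.mk (span {((a : ℤ) : R), ω})),
      Ideal.Quotient.eq_zero_iff_mem]
    exact hmem
  let f : ZMod a →+ R ⧸ span {((a : ℤ) : R), ω} :=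
    ZMod.lift a ⟨(Int.castRingHom (R ⧸ span {((a : ℤ) : R), ω})).toAddMonoidHom, hker⟩
  have hf : Function.Surjective f := by
    intro x
    obtain ⟨α, rfl⟩ := Ideal.Quotient.mk_surjective x
    obtain ⟨X, Y, hXY⟩ := hω α
    obtain ⟨u, w, huw⟩ := ham
    refine ⟨((w * X : ℤ) : ZMod a), ?_⟩
    change ZMod.lift a _ _ = _
    rw [ZMod.lift_coe]
    change (((w * X : ℤ)) : R ⧸ span {((a : ℤ) : R), ω}) = _
    rw [← map_intCast (Ideal.Quotient.mk (span {((a : ℤ) : R), ω})), Ideal.Quotient.eq,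
      mem_span_pair]
    have huw' : (u : R) * a + w * m = 1 := by simpa using congrArg (Int.cast : ℤ → R) huw
    refine ⟨-(u * α), -(w * Y), ?_⟩
    push_cast
    linear_combination (-α) * huw' + w * hXY
  have := Nat.card_le_card_of_surjective f hf
  rw [Nat.card_zmod] at this
  exact_mod_cast this

namespace IsQuadraticGenerator

variable {ω : R} {a b c : ℤ} {m : ℕ}

theorem absNorm_span_pair (h : IsQuadraticGenerator ω b (a * c) m) (hω : ω ^ 2 = b * ω - a * c)
    (habc : Int.gcd a (Int.gcd b c) = 1) (ha : 0 < a) (ham : IsCoprime a m) :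
    (absNorm (span {(a : R), ω}) : ℤ) = a := by
  have h1 := absNorm_span_pair_le ha ham h.exists_mul_eq
  have h2 := absNorm_span_pair_le (ω := b - ω) ha ham fun α ↦ by
    obtain ⟨X, Y, hXY⟩ := h.exists_mul_eq α
    exact ⟨X + b * Y, -Y, by rw [hXY]; push_cast; ring⟩
  have h3 := congrArg absNorm (span_pair_mul_conj hω habc)
  have h4 := h.absNorm_eq a 0
  rw [Int.cast_zero, zero_mul, add_zero, ← h3, map_mul] at h4
  push_cast at h4
  refine le_antisymm h1 (le_of_not_gt fun hlt ↦ ?_)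
  have : (absNorm (span {(a : R), ω}) : ℤ) * absNorm (span {(a : R), b - ω}) < a * a :=
    mul_lt_mul hlt h2 (by
      by_contra hcon
      have h0 : (absNorm (span {(a : R), b - ω}) : ℤ) = 0 := by lia
      rw [h0] at h4
      nlinarith) ha.le
  nlinarith

theorem dvd_of_mem_span_pair (h : IsQuadraticGenerator ω b (a * c) m)
    (hω : ω ^ 2 = b * ω - a * c) (habc : Int.gcd a (Int.gcd b c) = 1) (ham : IsCoprime a m)
    {X Y : ℤ} (hXY : (X + Y * ω : R) ∈ span {(a : R), ω}) : a ∣ X := by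
  have hω' : ω ∈ span {(a : R), ω} := subset_span (by simp)
  have h4 : b - ω ∈ span {(a : R), b - ω} := subset_span (by simp)
  have hX : (X : R) ∈ span {(a : R), ω} := by
    simpa using sub_mem hXY (mul_mem_left _ (Y : R) hω')
  have h1 := mul_mem_mul hX h4
  rw [span_pair_mul_conj hω habc, mem_span_singleton] at h1
  obtain ⟨β, hβ⟩ := h1
  obtain ⟨X', Y', hXY'⟩ := h.exists_mul_eq β
  have h2 := h.eq_and_eq (X := m * X * b) (Y := -(m * X)) (X' := a * X') (Y' := a * Y') (by
    push_cast
    linear_combination m * hβ + a * hXY')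
  exact ham.dvd_of_dvd_mul_left ⟨-Y', by linear_combination -h2.2⟩

theorem infinite_setOf_prime_represented [Module.Finite ℤ R] [CharZero R] [Finite (ClassGroup R)]
    (h : IsQuadraticGenerator ω b (a * c) m)
    (hω : ω ^ 2 = b * ω - a * c) (habc : Int.gcd a (Int.gcd b c) = 1) (ha : 0 < a)
    (ham : IsCoprime a m) :
    {p : ℕ | p.Prime ∧ ∃ x y : ℤ, a * x ^ 2 + b * x * y + c * y ^ 2 = p}.Infinite := by
  have hN := h.absNorm_span_pair hω habc ha ham
  have hne : span {(a : R), ω} ≠ ⊥ := by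
    rw [Ne, ← absNorm_eq_zero_iff]
    lia
  have hcop : IsCoprime (span {(a : R), ω}) (span {(m : R)}) := by
    obtain ⟨u, v, huv⟩ := ham
    have huv' : (u : R) * a + v * m = 1 := by simpa using congrArg (Int.cast : ℤ → R) huv
    exact isCoprime_iff_exists.2 ⟨u * a, mul_mem_left _ _ (subset_span (by simp)), v * m,
      mul_mem_left _ _ (mem_span_singleton_self _), huv'⟩
  obtain ⟨t, ht⟩ := exists_idealOf_eq hne hcop
  obtain ⟨φ, hφ⟩ := exists_equiv_rayClass h.not_isUnit (fun u ↦ h.eq_one_of_isUnit)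
    (g := -rayClass t) (t := t) (neg_add_cancel _)
  intro hfin
  refine h.infinite_setOf_prime_absNorm (-rayClass t) ?_
  have hinj : Function.Injective fun v : PrimeTo (m : R) ↦ v.1.asIdeal := fun v w hvw ↦
    Subtype.ext (IsDedekindDomain.HeightOneSpectrum.ext hvw)
  refine (hfin.biUnion (t := fun p ↦ (fun v : PrimeTo (m : R) ↦ v.1.asIdeal) ⁻¹'
    {I : Ideal R | absNorm I = p}) fun p hp ↦ ?_).subset fun v hv ↦ ?_
  · exact (finite_setOfPred_absNorm_eq p).preimage hinj.injOn
  · obtain ⟨hv, hp⟩ := hv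
    refine Set.mem_biUnion (x := absNorm v.1.asIdeal) ⟨hp, ?_⟩ rfl
    set γ := φ.symm ⟨{v}, hv⟩ with hγ
    have hspan := hφ γ
    rw [hγ, Equiv.apply_symm_apply, ← hγ, idealOf_singleton] at hspan
    obtain ⟨α, hα⟩ := γ.2.2
    obtain ⟨X, Y, hXY⟩ := h.exists_mul_eq α
    have hγXY : γ.1 = ((X + 1 : ℤ) : R) + Y * ω := by
      push_cast
      linear_combination hα + hXY
    have hmem := γ.2.1
    rw [hγXY, ht] at hmem
    obtain ⟨x, hx⟩ := h.dvd_of_mem_span_pair hω habc ham hmem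
    have hnorm := h.absNorm_eq (X + 1) Y
    rw [← hγXY, ← hspan, map_mul, ht, Nat.cast_mul, hN, hx] at hnorm
    refine ⟨x, Y, mul_left_cancel₀ ha.ne' ?_⟩
    linear_combination -hnorm

end IsQuadraticGenerator

end RepresentedPrimes

section QuadraticField

open NumberField QuadraticAlgebra

variable {b e : ℤ} [Fact (∀ r : ℚ, r ^ 2 ≠ -e + b * r)]

instance : NumberField (QuadraticAlgebra ℚ (-e) b) where
  to_charZero := inferInstance
  to_finiteDimensional := inferInstance

theorem algebraNorm_eq_norm (z : QuadraticAlgebra ℚ (-e) b) :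
    Algebra.norm ℚ z = z.norm := by
  rw [← det_toLinearMap_eq_norm, Algebra.norm_apply]
  rfl

theorem exists_intCast_eq_trace {z : QuadraticAlgebra ℚ (-e) b} (hz : IsIntegral ℤ z) :
    ∃ n : ℤ, (n : ℚ) = z.trace := by
  have h1 : IsIntegral ℤ (z + star z) := hz.add (map_isIntegral_int (starRingEnd _) hz)
  rw [← algebraMap_trace_eq_add_star,
    isIntegral_algebraMap_iff (FaithfulSMul.algebraMap_injective ℚ _)] at h1
  exact IsIntegrallyClosed.isIntegral_iff.1 h1

theorem isIntegral_omega : IsIntegral ℤ (ω : QuadraticAlgebra ℚ (-e) b) := by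
  refine ⟨Polynomial.X ^ 2 - Polynomial.C b * Polynomial.X + Polynomial.C e, by monicity!, ?_⟩
  simp only [Polynomial.eval₂_add, Polynomial.eval₂_sub, Polynomial.eval₂_mul,
    Polynomial.eval₂_X, Polynomial.eval₂_C, sq, omega_mul_omega_eq_mk]
  ext <;> simp

variable (b e) in
/-- The generator `ω` as an algebraic integer. -/
def integralOmega : 𝓞 (QuadraticAlgebra ℚ (-e) b) := ⟨ω, isIntegral_omega⟩

theorem coe_integralOmega : (integralOmega b e : QuadraticAlgebra ℚ (-e) b) = ω := rfl

theorem isQuadraticGenerator_omega {m : ℕ} (hm : 0 < m) (hdisc : (m : ℤ) = 4 * e - b ^ 2) :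
    IsQuadraticGenerator (integralOmega b e) b e m where
  three_le := by
    rcases Int.even_or_odd' b with ⟨k, rfl | rfl⟩
    · have : (m : ℤ) = 4 * (e - k ^ 2) := by rw [hdisc]; ring
      omega
    · have : (m : ℤ) = 4 * (e - k ^ 2 - k) - 1 := by rw [hdisc]; ring
      omega
  disc := hdisc
  exists_mul_eq α := by
    have hα := RingOfIntegers.isIntegral_coe α
    obtain ⟨T, hT⟩ := exists_intCast_eq_trace hα
    obtain ⟨U, hU⟩ := exists_intCast_eq_trace (hα.mul isIntegral_omega)
    have hdisc' : (m : ℚ) = 4 * e - b ^ 2 := by exact_mod_cast hdisc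
    simp only [trace_def, re_mul, im_mul, omega_re, omega_im] at hT hU
    obtain ⟨P, hP⟩ : ∃ P : ℤ, (P : ℚ) = m * (α : QuadraticAlgebra ℚ (-e) b).re :=
      ⟨b * U - (b ^ 2 - 2 * e) * T, by push_cast; rw [hT, hU, hdisc']; ring⟩
    obtain ⟨Q, hQ⟩ : ∃ Q : ℤ, (Q : ℚ) = m * (α : QuadraticAlgebra ℚ (-e) b).im :=
      ⟨b * T - 2 * U, by push_cast; rw [hT, hU, hdisc']; ring⟩
    refine ⟨P, Q, RingOfIntegers.ext ?_⟩
    ext <;> simp [coe_integralOmega, hP, hQ]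
  absNorm_eq X Y := by
    rw [Ideal.absNorm_span_singleton]
    have h1 : Algebra.norm ℤ (X + Y * integralOmega b e : 𝓞 (QuadraticAlgebra ℚ (-e) b)) =
        X ^ 2 + b * X * Y + e * Y ^ 2 := by
      have := Algebra.coe_norm_int (X + Y * integralOmega b e : 𝓞 (QuadraticAlgebra ℚ (-e) b))
      rw [algebraNorm_eq_norm, norm_def] at this
      simp [coe_integralOmega] at this
      have h2 :
          ((Algebra.norm ℤ (X + Y * integralOmega b e : 𝓞 (QuadraticAlgebra ℚ (-e) b)) : ℤ) : ℚ) =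
          ((X ^ 2 + b * X * Y + e * Y ^ 2 : ℤ) : ℚ) := by
        rw [this]
        push_cast
        ring
      exact_mod_cast h2
    rw [h1, Int.natCast_natAbs, abs_of_nonneg]
    nlinarith [sq_nonneg (2 * X + b * Y),
      mul_nonneg (Nat.cast_nonneg m : (0 : ℤ) ≤ m) (sq_nonneg Y)]

end QuadraticField

theorem infinite_setOf_prime_represented_of_isCoprime {a b c : ℤ} {m : ℕ} (ha : 0 < a)
    (habc : Int.gcd a (Int.gcd b c) = 1) (hm : 0 < m) (hdisc : (m : ℤ) = 4 * (a * c) - b ^ 2)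
    (ham : IsCoprime a m) :
    {p : ℕ | p.Prime ∧ ∃ x y : ℤ, a * x ^ 2 + b * x * y + c * y ^ 2 = p}.Infinite := by
  have hfact : Fact (∀ r : ℚ, r ^ 2 ≠ -((a * c : ℤ) : ℚ) + b * r) := ⟨fun r hr ↦ by
    have h1 : (m : ℚ) = 4 * (a * c) - b ^ 2 := by exact_mod_cast hdisc
    have h2 : (0 : ℚ) < m := by exact_mod_cast hm
    push_cast at hr
    nlinarith [sq_nonneg (2 * r - b)]⟩
  refine (isQuadraticGenerator_omega hm hdisc).infinite_setOf_prime_represented ?_ habc ha ham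
  refine NumberField.RingOfIntegers.ext ?_
  ext <;> simp [sq, coe_integralOmega]

theorem dvd_prod_filter_primeFactors_iff {m p : ℕ} (hm : m ≠ 0) (hp : p.Prime) (P : ℕ → Prop)
    [DecidablePred P] :
    (p : ℤ) ∣ ((∏ l ∈ m.primeFactors with P l, l : ℕ) : ℤ) ↔ p ∣ m ∧ P p := by
  rw [Int.natCast_dvd_natCast, hp.prime.dvd_finsetProd_iff]
  constructor
  · rintro ⟨l, hl, hpl⟩
    rw [Finset.mem_filter, Nat.mem_primeFactors] at hl
    obtain rfl := (Nat.prime_dvd_prime_iff_eq hp hl.1.1).1 hpl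
    exact ⟨hl.1.2.1, hl.2⟩
  · rintro ⟨h1, h2⟩
    exact ⟨p, Finset.mem_filter.2 ⟨Nat.mem_primeFactors.2 ⟨hp, h1, hm⟩, h2⟩, dvd_rfl⟩

theorem Int.isCoprime_of_forall_prime_not_dvd {x y : ℤ}
    (h : ∀ p : ℕ, p.Prime → (p : ℤ) ∣ x → (p : ℤ) ∣ y → False) : IsCoprime x y := by
  rw [Int.isCoprime_iff_nat_coprime]
  exact Nat.Coprime.symm (Nat.coprime_of_dvd fun p hp h1 h2 ↦
    h p hp (Int.natCast_dvd.2 h2) (Int.natCast_dvd.2 h1))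

/-- A primitive form properly represents a value coprime to a given nonzero integer. -/
theorem exists_isCoprime_value {a b c : ℤ} (habc : Int.gcd a (Int.gcd b c) = 1) {m : ℕ}
    (hm : m ≠ 0) :
    ∃ x y : ℤ, IsCoprime x y ∧ IsCoprime (a * x ^ 2 + b * x * y + c * y ^ 2) m := by
  classical
  refine ⟨((∏ p ∈ m.primeFactors with (fun p : ℕ ↦ (p : ℤ) ∣ a ∧ ¬ (p : ℤ) ∣ c) p, p : ℕ) : ℤ),
    ((∏ p ∈ m.primeFactors with (fun p : ℕ ↦ ¬ (p : ℤ) ∣ a) p, p : ℕ) : ℤ),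
    Int.isCoprime_of_forall_prime_not_dvd fun p hp h1 h2 ↦ ?_,
    Int.isCoprime_of_forall_prime_not_dvd fun p hp h1 h2 ↦ ?_⟩
  · rw [dvd_prod_filter_primeFactors_iff hm hp] at h1 h2
    exact h2.2 h1.2.1
  · have hx := dvd_prod_filter_primeFactors_iff hm hp fun p ↦ (p : ℤ) ∣ a ∧ ¬ (p : ℤ) ∣ c
    have hy := dvd_prod_filter_primeFactors_iff hm hp fun p ↦ ¬ (p : ℤ) ∣ a
    have hpm : p ∣ m := Int.natCast_dvd_natCast.1 h2
    have hp' : Prime (p : ℤ) := Nat.prime_iff_prime_int.1 hp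
    have hb : (p : ℤ) ∣ a → (p : ℤ) ∣ c → ¬ (p : ℤ) ∣ b := fun h3 h4 h5 ↦ by
      have := Int.dvd_coe_gcd h3 (Int.dvd_coe_gcd h5 h4)
      rw [habc] at this
      exact hp'.not_isUnit (isUnit_of_dvd_one this)
    generalize ((∏ p ∈ m.primeFactors with (fun p : ℕ ↦ (p : ℤ) ∣ a ∧ ¬ (p : ℤ) ∣ c) p, p : ℕ) : ℤ)
      = x at *
    generalize ((∏ p ∈ m.primeFactors with (fun p : ℕ ↦ ¬ (p : ℤ) ∣ a) p, p : ℕ) : ℤ) = y at *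
    simp only [hpm, true_and] at hx hy
    by_cases h3 : (p : ℤ) ∣ a
    · have hy' : ¬ (p : ℤ) ∣ y := by tauto
      have h4 : (p : ℤ) ∣ (b * x + c * y) * y := by
        rw [show (b * x + c * y) * y = a * x ^ 2 + b * x * y + c * y ^ 2 - a * x ^ 2 by ring]
        exact dvd_sub h1 (h3.mul_right _)
      have h5 := (hp'.dvd_or_dvd h4).resolve_right hy'
      by_cases h6 : (p : ℤ) ∣ c
      · exact ((hp'.dvd_or_dvd ((dvd_add_left (dvd_mul_of_dvd_left h6 y)).1 h5)).elim
          (hb h3 h6) (by tauto))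
      · exact ((hp'.dvd_or_dvd ((dvd_add_right (dvd_mul_of_dvd_right (hx.2 ⟨h3, h6⟩) b)).1 h5)).elim
          h6 hy')
    · have h4 : (p : ℤ) ∣ a * x ^ 2 := by
        rw [show a * x ^ 2 = a * x ^ 2 + b * x * y + c * y ^ 2 - (b * x + c * y) * y by ring]
        exact dvd_sub h1 ((hy.2 h3).mul_left _)
      exact (hp'.dvd_or_dvd h4).elim h3 fun h ↦ h3 (hx.1 (hp'.dvd_of_dvd_pow h)).1

theorem infinite_setOf_prime_represented {a b c : ℤ} (ha : 0 < a)
    (habc : Int.gcd a (Int.gcd b c) = 1) (hdisc : b ^ 2 - 4 * a * c < 0) :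
    {p : ℕ | p.Prime ∧ ∃ x y : ℤ, a * x ^ 2 + b * x * y + c * y ^ 2 = p}.Infinite := by
  obtain ⟨m, hm⟩ := Int.eq_ofNat_of_zero_le (show 0 ≤ 4 * (a * c) - b ^ 2 by linarith)
  have hm0 : 0 < m := by
    have : (0 : ℤ) < m := by linarith
    exact_mod_cast this
  obtain ⟨x, y, ⟨u, v, huv⟩, hcop⟩ := exists_isCoprime_value habc hm0.ne'
  have hpos : 0 < a * x ^ 2 + b * x * y + c * y ^ 2 := by
    by_contra! hneg
    have h1 : (2 * a * x + b * y) ^ 2 + m * y ^ 2 ≤ 0 := by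
      rw [← hm]
      nlinarith
    have hm1 : (0 : ℤ) < m := by exact_mod_cast hm0
    have hy : y = 0 := by
      by_contra hy
      nlinarith [sq_nonneg (2 * a * x + b * y), mul_pos hm1 (sq_pos_of_ne_zero hy)]
    subst hy
    have hx : x = 0 := by
      by_contra hx
      nlinarith [mul_pos ha (sq_pos_of_ne_zero hx)]
    subst hx
    simp at huv
  set b' : ℤ := -2 * a * x * v + b * (x * u - y * v) + 2 * c * y * u with hb'
  set c' : ℤ := a * v ^ 2 - b * u * v + c * u ^ 2 with hc'
  have key : (m : ℤ) = 4 * ((a * x ^ 2 + b * x * y + c * y ^ 2) * c') - b' ^ 2 := by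
    rw [← hm, ← mul_one (4 * (a * c) - b ^ 2), ← one_pow 2, ← huv]
    ring
  refine (infinite_setOf_prime_represented_of_isCoprime hpos ?_ hm0 key hcop).mono ?_
  · by_contra hne
    obtain ⟨p, hp, hpd⟩ := Nat.exists_prime_and_dvd hne
    have h0 := Int.natCast_dvd_natCast.2 hpd
    have h1 := h0.trans (Int.gcd_dvd_left _ _)
    have h2 := (h0.trans (Int.gcd_dvd_right _ _)).trans (Int.gcd_dvd_left _ _)
    refine (Nat.prime_iff_prime_int.1 hp).not_isUnit (hcop.isUnit_of_dvd' h1 ?_)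
    rw [key]
    exact dvd_sub ((h1.mul_right _).mul_left _) (dvd_pow h2 two_ne_zero)
  · rintro p ⟨hp, s, t, hst⟩
    refine ⟨hp, x * s - v * t, y * s + u * t, ?_⟩
    rw [← hst, hb', hc']
    ring

theorem Int.gcd_eq_one_of_form_eq_prime {a b c x y : ℤ} {p : ℕ} (hp : p.Prime)
    (h : a * x ^ 2 + b * x * y + c * y ^ 2 = p) : Int.gcd x y = 1 := by
  obtain ⟨s, hs⟩ := Int.gcd_dvd_left x y
  obtain ⟨t, ht⟩ := Int.gcd_dvd_right x y
  set g := Int.gcd x y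
  have h1 : ((g * g : ℕ) : ℤ) ∣ (p : ℤ) :=
    ⟨a * s ^ 2 + b * s * t + c * t ^ 2, by rw [← h, hs, ht]; push_cast; ring⟩
  exact Nat.isUnit_iff.1 (hp.prime.irreducible.squarefree g (Int.natCast_dvd_natCast.1 h1))

theorem weber_primes_represented (a b c : ℤ)
    (hprim : Int.gcd a (Int.gcd b c) = 1)
    (ha : 0 < a) (hdisc : b ^ 2 - 4 * a * c < 0)
    (N : ℤ) (hN : 1 ≤ N) :
    {p : ℕ | p.Prime ∧ Odd p ∧ ¬ (p : ℤ) ∣ N ∧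
      ∃ x y : ℤ, a * x ^ 2 + b * x * y + c * y ^ 2 = p}.Infinite ∧
    ∃ (x y : ℤ) (p : ℕ), p.Prime ∧ Odd p ∧ ¬ (p : ℤ) ∣ N ∧
      a * x ^ 2 + b * x * y + c * y ^ 2 = p ∧ Int.gcd x y = 1 := by
  have hinf : {p : ℕ | p.Prime ∧ Odd p ∧ ¬ (p : ℤ) ∣ N ∧
      ∃ x y : ℤ, a * x ^ 2 + b * x * y + c * y ^ 2 = p}.Infinite := by
    refine ((infinite_setOf_prime_represented ha hprim hdisc).sdiff
      (Set.finite_Iic (2 + N.toNat))).mono ?_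
    rintro p ⟨⟨hp, hrep⟩, hlarge⟩
    rw [Set.mem_Iic, not_le] at hlarge
    refine ⟨hp, hp.odd_of_ne_two (by omega), fun hdvd ↦ ?_, hrep⟩
    have := Int.le_of_dvd (by omega) hdvd
    omega
  obtain ⟨p, hp, hodd, hpN, x, y, hxy⟩ := hinf.nonempty
  exact ⟨hinf, x, y, p, hp, hodd, hpN, hxy, Int.gcd_eq_one_of_form_eq_prime hp hxy⟩
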